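/- arXiv:1604.00941 — 2 statements merged into one kernel-verified Lean document; each statement's English description precedes it below -/
import Mathlib

section
/- Define V₂₁(τ) := i·e^{−πiτ/16}·μ(τ/4, τ/2; τ) and E₂(z) := η(16z)⁹/(η(8z)³·η(32z)³). Then for every τ ∈ ℍ: V₂₁(τ) − ζ₈^{−1}·(τ+1)^{−1/2}·V₂₁(τ/(τ+1)) = −(i/8)·∫_{1}^{i∞} E₂(u/32)/√(−i(u+τ)) du, where ζ₈ := e^{2πi/8} and the integral is taken along the vertical path u = 1 + it, t ∈ (0, ∞), i.e., it equals −(i/8)·i·∫₀^∞ E₂((1+it)/32)/√(−i(1+it+τ)) dt. (This is the transformation of Theorem 1.2(ii) for (m,n) = (2,1) on ℍ, where c₂ = 8 and E₂(2u/c₂²) = E₂(u/32).) -/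
open Complex

/-- The Dedekind eta function `η(τ) = e^{πiτ/12} ∏_{n≥1} (1 - e^{2πinτ})`. -/
noncomputable def dedekindEta (τ : ℂ) : ℂ :=
  Complex.exp ((Real.pi : ℂ) * I * τ / 12) *
    ∏' n : ℕ, (1 - Complex.exp (2 * (Real.pi : ℂ) * I * ((n : ℂ) + 1) * τ))

/-- Zwegers' Jacobi theta function. -/
noncomputable def jacobiThetaZw (v τ : ℂ) : ℂ :=
  ∑' n : ℤ, Complex.exp (2 * (Real.pi : ℂ) * I * ((n : ℂ) + 1/2) * (v + 1/2)) *
    Complex.exp ((Real.pi : ℂ) * I * τ * ((n : ℂ) + 1/2) ^ 2)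

/-- Zwegers' μ-function. -/
noncomputable def muZw (u v τ : ℂ) : ℂ :=
  Complex.exp ((Real.pi : ℂ) * I * u) / jacobiThetaZw v τ *
    ∑' n : ℤ, (-1 : ℂ) ^ n * Complex.exp (2 * (Real.pi : ℂ) * I * (n : ℂ) * v) *
      Complex.exp ((Real.pi : ℂ) * I * τ * (n : ℂ) * ((n : ℂ) + 1)) /
      (1 - Complex.exp (2 * (Real.pi : ℂ) * I * u) * Complex.exp (2 * (Real.pi : ℂ) * I * (n : ℂ) * τ))

/-- `V₂₁(τ) = i e^{−πiτ/16} μ(τ/4, τ/2; τ)`. -/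
noncomputable def V21 (τ : ℂ) : ℂ :=
  I * Complex.exp (-(Real.pi : ℂ) * I * τ / 16) * muZw (τ/4) (τ/2) τ

/-- `E₂(z) = η(16z)⁹/(η(8z)³η(32z)³)`. -/
noncomputable def E2fun (z : ℂ) : ℂ :=
  dedekindEta (16 * z) ^ 9 / (dedekindEta (8 * z) ^ 3 * dedekindEta (32 * z) ^ 3)

/-!
Up to elementary factors, `V₂₁(τ)` is `A(τ, u) / θ(τ + 1)` at `u = τ / 4` for an Appell sum `A`.
As functions of `u`, `A(τ, ·)` and its image under `τ ↦ τ / (τ + 1)` have the same simple poles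
and the same quasi-periods, up to inhomogeneous terms that also appear in the functional equations
of Zwegers' Mordell integral `h`. So the difference of the two Appell sums minus `θ · h` is entire
and homogeneously quasi-periodic; its modulus times a suitable weight is doubly periodic, and it
vanishes by Liouville's theorem. Moving the contour of `h` by `i / 4` turns the left side into the
integral of `e^{-πx/2} / cosh(π(x + i/4))` against the Gaussian `e^{πi(τ + 1)x²}`.

On the right, Jacobi's triple product turns the eta quotient `E₂` into a unary theta series of
weight `3 / 2`. Write `1 / √(-i(u + τ))` as a Gaussian integral and exchange the integrals: each
term of the theta series contributes a partial fraction, and these sum to cosecants, which give the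
same integral.
-/

section TripleProduct

open Filter Topology

/-- The finite `q`-Pochhammer symbol `(q; q)_n`. -/
noncomputable def qPoch (q : ℂ) (n : ℕ) : ℂ := ∏ k ∈ Finset.range n, (1 - q ^ (k + 1))

/-- The Euler function `(q; q)_∞`. -/
noncomputable def eulerFn (q : ℂ) : ℂ := ∏' n : ℕ, (1 - q ^ (n + 1))

/-- The reciprocal `1 / (q; q)_n`, with the usual convention that it vanishes for `n < 0`. -/
noncomputable def qPochInv (q : ℂ) (n : ℤ) : ℂ := if n < 0 then 0 else (qPoch q n.toNat)⁻¹

/-- The coefficient `(-1)^l s^{l²} [2N choose N + l]_{s²}` of `z^l` in the finite triple product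
`∏_{k < N} (1 - z s^{2k+1}) (1 - z⁻¹ s^{2k+1})`. -/
noncomputable def tripleCoeff (s : ℂ) (N : ℕ) (l : ℤ) : ℂ :=
  (-1) ^ l * s ^ (l ^ 2) *
    (qPoch (s ^ 2) (2 * N) * qPochInv (s ^ 2) (N + l) * qPochInv (s ^ 2) (N - l))

lemma norm_sq_lt_one {s : ℂ} (hs : ‖s‖ < 1) : ‖s ^ 2‖ < 1 := by
  rw [norm_pow]
  exact pow_lt_one₀ (norm_nonneg _) hs two_ne_zero

lemma one_sub_pow_succ_ne_zero {q : ℂ} (hq : ‖q‖ < 1) (k : ℕ) : 1 - q ^ (k + 1) ≠ 0 := by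
  intro h
  have hpow : ‖q ^ (k + 1)‖ < 1 := by
    rw [norm_pow]
    exact pow_lt_one₀ (norm_nonneg _) hq k.succ_ne_zero
  rw [← sub_eq_zero.mp h, norm_one] at hpow
  exact hpow.false

lemma qPoch_succ (q : ℂ) (n : ℕ) : qPoch q (n + 1) = qPoch q n * (1 - q ^ (n + 1)) :=
  Finset.prod_range_succ _ _

lemma qPoch_ne_zero {q : ℂ} (hq : ‖q‖ < 1) (n : ℕ) : qPoch q n ≠ 0 :=
  Finset.prod_ne_zero_iff.mpr fun k _ => one_sub_pow_succ_ne_zero hq k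

lemma qPochInv_of_neg (q : ℂ) {n : ℤ} (hn : n < 0) : qPochInv q n = 0 := if_pos hn

lemma qPochInv_natCast (q : ℂ) (n : ℕ) : qPochInv q n = (qPoch q n)⁻¹ := by
  simp [qPochInv]

lemma qPochInv_sub_one {q : ℂ} (hq : ‖q‖ < 1) (n : ℤ) :
    qPochInv q (n - 1) = (1 - q ^ n) * qPochInv q n := by
  rcases lt_trichotomy n 0 with hn | rfl | hn
  · rw [qPochInv_of_neg q hn, qPochInv_of_neg q (by lia), mul_zero]
  · rw [qPochInv_of_neg q (by lia), zpow_zero, sub_self, zero_mul]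
  · obtain ⟨m, rfl⟩ : ∃ m : ℕ, n = (m + 1 : ℕ) := ⟨(n - 1).toNat, by lia⟩
    rw [show ((m + 1 : ℕ) : ℤ) - 1 = m by push_cast; ring, qPochInv_natCast, qPochInv_natCast,
      qPoch_succ, zpow_natCast]
    have := qPoch_ne_zero hq m
    have := one_sub_pow_succ_ne_zero hq m
    field_simp

lemma tripleCoeff_zero (s : ℂ) (l : ℤ) : tripleCoeff s 0 l = if l = 0 then 1 else 0 := by
  rcases lt_trichotomy l 0 with hl | rfl | hl
  · simp [tripleCoeff, qPochInv, hl, hl.ne]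
  · simp [tripleCoeff, qPochInv, qPoch]
  · simp [tripleCoeff, qPochInv, hl, hl.ne']

lemma tripleCoeff_eq_zero (s : ℂ) {N : ℕ} {l : ℤ} (hl : l ∉ Finset.Icc (-N : ℤ) N) :
    tripleCoeff s N l = 0 := by
  rw [Finset.mem_Icc, not_and_or, not_le, not_le] at hl
  rcases hl with hl | hl
  · simp [tripleCoeff, qPochInv_of_neg (s ^ 2) (show (N : ℤ) + l < 0 by lia)]
  · simp [tripleCoeff, qPochInv_of_neg (s ^ 2) (show (N : ℤ) - l < 0 by lia)]

lemma tripleCoeff_succ {s : ℂ} (hs0 : s ≠ 0) (hs : ‖s‖ < 1) (N : ℕ) (l : ℤ) :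
    tripleCoeff s (N + 1) l = (1 + (s ^ (2 * N + 1)) ^ 2) * tripleCoeff s N l
      - s ^ (2 * N + 1) * (tripleCoeff s N (l - 1) + tripleCoeff s N (l + 1)) := by
  have hq := norm_sq_lt_one hs
  have hsl : s ^ l ≠ 0 := zpow_ne_zero l hs0
  have sq_sub : s ^ ((l - 1) ^ 2) = s ^ (l ^ 2) * s / (s ^ l) ^ 2 := by
    rw [show (l - 1) ^ 2 = l ^ 2 + 1 - l - l by ring, zpow_sub₀ hs0, zpow_sub₀ hs0, zpow_add₀ hs0,
      zpow_one]
    field_simp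
  have sq_add : s ^ ((l + 1) ^ 2) = s ^ (l ^ 2) * s * (s ^ l) ^ 2 := by
    rw [show (l + 1) ^ 2 = l ^ 2 + 1 + l + l by ring, zpow_add₀ hs0, zpow_add₀ hs0, zpow_add₀ hs0,
      zpow_one]
    ring
  have sign_sub : (-1 : ℂ) ^ (l - 1) = -(-1) ^ l := by
    rw [zpow_sub₀ (by norm_num), zpow_one, div_neg, div_one]
  have sign_add : (-1 : ℂ) ^ (l + 1) = -(-1) ^ l := by
    rw [zpow_add₀ (by norm_num), zpow_one, mul_neg_one]
  have pow_two_mul (n : ℤ) : (s ^ 2) ^ n = (s ^ n) ^ 2 := by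
    rw [← zpow_natCast, ← zpow_mul, mul_comm, zpow_mul, zpow_natCast]
  have down_add := qPochInv_sub_one hq (N + 1 + l)
  have down_sub := qPochInv_sub_one hq (N + 1 - l)
  have down_add' := qPochInv_sub_one hq (N + l)
  have down_sub' := qPochInv_sub_one hq (N - l)
  simp only [tripleCoeff, Nat.cast_succ, mul_add_one, qPoch_succ, sq_sub, sq_add, sign_sub,
    sign_add]
  rw [show (N : ℤ) + (l - 1) = N + l - 1 by ring, show (N : ℤ) - (l - 1) = N + 1 - l by ring,
    show (N : ℤ) + (l + 1) = N + 1 + l by ring, show (N : ℤ) - (l + 1) = N - l - 1 by ring,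
    down_add', down_sub', show (N : ℤ) + l = N + 1 + l - 1 by ring,
    show (N : ℤ) - l = N + 1 - l - 1 by ring, down_add, down_sub]
  simp only [pow_two_mul, zpow_add₀ hs0, zpow_sub₀ hs0, zpow_one, zpow_natCast]
  have : s ^ N ≠ 0 := pow_ne_zero N hs0
  field_simp
  ring

lemma hasSum_tripleCoeff {s : ℂ} (hs0 : s ≠ 0) (hs : ‖s‖ < 1) {z : ℂ} (hz : z ≠ 0) (N : ℕ) :
    HasSum (fun l : ℤ => tripleCoeff s N l * z ^ l)
      (∏ k ∈ Finset.range N, (1 - z * s ^ (2 * k + 1)) * (1 - s ^ (2 * k + 1) / z)) := by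
  induction N with
  | zero =>
    rw [Finset.prod_range_zero]
    convert hasSum_ite_eq (0 : ℤ) (1 : ℂ) using 2 with l
    rw [tripleCoeff_zero]
    split_ifs with h <;> simp [h]
  | succ N ih =>
    have shift (k : ℤ) := (Equiv.addRight k).hasSum_iff.mpr ih
    rw [Finset.prod_range_succ]
    convert! (ih.mul_left (1 + (s ^ (2 * N + 1)) ^ 2)).sub
      (((shift (-1)).mul_left (s ^ (2 * N + 1) * z)).add
        ((shift 1).mul_left (s ^ (2 * N + 1) / z))) using 1
    · ext l
      simp only [Function.comp_apply, Equiv.coe_addRight]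
      rw [tripleCoeff_succ hs0 hs, ← sub_eq_add_neg, zpow_add_one₀ hz, zpow_sub_one₀ hz]
      field_simp
    · field_simp
      ring

lemma eulerFn_ne_zero {q : ℂ} (hq : ‖q‖ < 1) : eulerFn q ≠ 0 := by
  have := tprod_one_add_ne_zero_of_summable (f := fun n : ℕ => -q ^ (n + 1))
    (fun n => by simpa [← sub_eq_add_neg] using one_sub_pow_succ_ne_zero hq n)
    (by simpa using
      (summable_nat_add_iff 1).mpr (summable_geometric_of_lt_one (norm_nonneg _) hq))
  simpa [eulerFn, sub_eq_add_neg] using this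

lemma tendsto_qPoch {q : ℂ} (hq : ‖q‖ < 1) : Tendsto (qPoch q) atTop (𝓝 (eulerFn q)) :=
  (ModularForm.multipliable_one_sub_pow hq).hasProd.tendsto_prod_nat

lemma tendsto_qPochInv {q : ℂ} (hq : ‖q‖ < 1) {f : ℕ → ℤ} (hf : Tendsto f atTop atTop) :
    Tendsto (fun N => qPochInv q (f N)) atTop (𝓝 (eulerFn q)⁻¹) := by
  have hnat : Tendsto (fun N => (f N).toNat) atTop atTop :=
    (tendsto_atTop_atTop.mpr fun b : ℕ => ⟨(b : ℤ), fun _ h => by lia⟩ :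
      Tendsto Int.toNat atTop atTop).comp hf
  refine (((tendsto_qPoch hq).comp hnat).inv₀ (eulerFn_ne_zero hq)).congr' ?_
  filter_upwards [hf.eventually_ge_atTop 0] with N hN
  simp [qPochInv, hN.not_gt]

lemma exists_norm_qPochInv_le {q : ℂ} (hq : ‖q‖ < 1) : ∃ K, 0 ≤ K ∧ ∀ n, ‖qPochInv q n‖ ≤ K := by
  obtain ⟨K, hK⟩ := ((tendsto_qPoch hq).inv₀ (eulerFn_ne_zero hq)).norm.bddAbove_range
  have hK' (n : ℕ) : ‖(qPoch q n)⁻¹‖ ≤ K := hK ⟨n, rfl⟩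
  have hK0 : 0 ≤ K := (norm_nonneg _).trans (hK' 0)
  refine ⟨K, hK0, fun n => ?_⟩
  unfold qPochInv
  split_ifs
  · simpa using hK0
  · exact hK' _

lemma tendsto_tripleCoeff {s : ℂ} (hs : ‖s‖ < 1) (l : ℤ) :
    Tendsto (fun N => tripleCoeff s N l) atTop (𝓝 ((-1) ^ l * s ^ (l ^ 2) / eulerFn (s ^ 2))) := by
  have hq := norm_sq_lt_one hs
  have hne := eulerFn_ne_zero hq
  have hnum : Tendsto (fun N : ℕ => qPoch (s ^ 2) (2 * N)) atTop (𝓝 (eulerFn (s ^ 2))) :=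
    (tendsto_qPoch hq).comp (tendsto_id.const_mul_atTop' two_pos)
  have hadd := tendsto_qPochInv hq (f := fun N : ℕ => (N : ℤ) + l)
    (tendsto_atTop_add_const_right _ _ tendsto_natCast_atTop_atTop)
  have hsub := tendsto_qPochInv hq (f := fun N : ℕ => (N : ℤ) - l)
    (tendsto_atTop_add_const_right _ _ tendsto_natCast_atTop_atTop)
  convert! ((hnum.mul hadd).mul hsub).const_mul ((-1) ^ l * s ^ (l ^ 2)) using 2
  field_simp

lemma exists_norm_tripleCoeff_le {s : ℂ} (hs : ‖s‖ < 1) :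
    ∃ K, 0 ≤ K ∧ ∀ N l, ‖tripleCoeff s N l‖ ≤ K * ‖s ^ (l ^ 2)‖ := by
  have hq := norm_sq_lt_one hs
  obtain ⟨K, hK0, hK⟩ := exists_norm_qPochInv_le hq
  obtain ⟨M, hM⟩ := (tendsto_qPoch hq).norm.bddAbove_range
  have hM' (n : ℕ) : ‖qPoch (s ^ 2) n‖ ≤ M := hM ⟨n, rfl⟩
  have hM0 : 0 ≤ M := (norm_nonneg _).trans (hM' 0)
  refine ⟨M * K * K, by positivity, fun N l => ?_⟩
  simp only [tripleCoeff, norm_mul, norm_zpow, norm_neg, norm_one, one_zpow, one_mul]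
  rw [mul_comm]
  gcongr
  exacts [hM' _, hK _, hK _]

lemma summable_norm_zpow_sq_mul {s : ℂ} (hs0 : s ≠ 0) (hs : ‖s‖ < 1) {z : ℂ} (hz : z ≠ 0)
    (k : ℕ) : Summable fun l : ℤ => ‖s ^ (l ^ 2)‖ * ‖(l : ℂ) ^ k * z ^ l‖ := by
  have hT : 0 < -Real.log ‖s‖ / Real.pi :=
    div_pos (neg_pos.mpr (Real.log_neg (norm_pos_iff.mpr hs0) hs)) Real.pi_pos
  refine (summable_pow_mul_jacobiTheta₂_term_bound (|Real.log ‖z‖| / (2 * Real.pi)) hT k)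
    |>.of_nonneg_of_le (fun _ => by positivity) fun l => ?_
  have hexp {w : ℂ} (hw : w ≠ 0) (n : ℤ) : ‖w ^ n‖ = Real.exp (n * Real.log ‖w‖) := by
    rw [norm_zpow, ← Real.log_zpow, Real.exp_log (zpow_pos (norm_pos_iff.mpr hw) n)]
  have hle : (l : ℝ) * Real.log ‖z‖ ≤ |Real.log ‖z‖| * |(l : ℝ)| := by
    rw [mul_comm, ← abs_mul]
    exact le_abs_self _
  rw [norm_mul, norm_pow, norm_intCast, mul_left_comm, hexp hs0, hexp hz, ← Real.exp_add]
  push_cast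
  gcongr
  rw [show -Real.pi * (-Real.log ‖s‖ / Real.pi * (l : ℝ) ^ 2
    - 2 * (|Real.log ‖z‖| / (2 * Real.pi)) * |(l : ℝ)|)
      = (l : ℝ) ^ 2 * Real.log ‖s‖ + |Real.log ‖z‖| * |(l : ℝ)| by field_simp; ring]
  gcongr

lemma tsum_eq_of_tendsto_tsum_tripleCoeff {s : ℂ} (hs : ‖s‖ < 1) {w : ℤ → ℂ}
    (hw : Summable fun l : ℤ => ‖s ^ (l ^ 2)‖ * ‖w l‖) {a : ℂ}
    (ha : Tendsto (fun N => ∑' l, tripleCoeff s N l * w l) atTop (𝓝 a)) :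
    ∑' l : ℤ, (-1) ^ l * s ^ (l ^ 2) * w l = eulerFn (s ^ 2) * a := by
  obtain ⟨K, -, hK⟩ := exists_norm_tripleCoeff_le hs
  have hlim := tendsto_tsum_of_dominated_convergence (hw.mul_left K)
    (fun l => (tendsto_tripleCoeff hs l).mul_const (w l))
    (Eventually.of_forall fun N l => by
      rw [norm_mul, ← mul_assoc]
      gcongr
      exact hK N l)
  rw [tendsto_nhds_unique ha hlim, ← tsum_mul_left]
  have := eulerFn_ne_zero (norm_sq_lt_one hs)
  exact tsum_congr fun l => by field_simp

lemma tsum_neg_one_zpow_mul_sq_ne_zero {s : ℂ} (hs0 : s ≠ 0) (hs : ‖s‖ < 1) :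
    ∑' l : ℤ, (-1) ^ l * s ^ (l ^ 2) ≠ 0 := by
  have hsum : Summable fun k : ℕ => ‖-s ^ (2 * k + 1)‖ := by
    simpa [pow_succ, pow_mul] using
      (summable_geometric_of_lt_one (norm_nonneg _) (norm_sq_lt_one hs)).mul_right ‖s‖
  have hprod := (multipliable_one_add_of_summable hsum).hasProd.tendsto_prod_nat
  have hprod_ne := tprod_one_add_ne_zero_of_summable
    (fun k => by simpa [← sub_eq_add_neg] using one_sub_pow_succ_ne_zero hs (2 * k)) hsum
  have hsq := tsum_eq_of_tendsto_tsum_tripleCoeff hs (w := fun l => 1 ^ l)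
    (by simpa using summable_norm_zpow_sq_mul hs0 hs one_ne_zero 0) ((hprod.mul hprod).congr
      fun N => by
        rw [(hasSum_tripleCoeff hs0 hs one_ne_zero N).tsum_eq, ← Finset.prod_mul_distrib]
        simp [sub_eq_add_neg])
  simp only [one_zpow, mul_one] at hsq
  rw [hsq]
  exact mul_ne_zero (eulerFn_ne_zero (norm_sq_lt_one hs)) (mul_ne_zero hprod_ne hprod_ne)

lemma tsum_tripleCoeff_mul (s : ℂ) (N : ℕ) (w : ℤ → ℂ) :
    ∑' l : ℤ, tripleCoeff s N l * w l = ∑ l ∈ Finset.Icc (-N : ℤ) N, tripleCoeff s N l * w l :=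
  tsum_eq_sum fun l hl => by rw [tripleCoeff_eq_zero s hl, zero_mul]

/- At `z = s⁻¹` the factor `1 - z s` of the finite triple product vanishes, so differentiating
there leaves only the product of the remaining factors. -/
lemma tsum_tripleCoeff_mul_intCast {s : ℂ} (hs0 : s ≠ 0) (hs : ‖s‖ < 1) (N : ℕ) :
    ∑' l : ℤ, tripleCoeff s (N + 1) l * (l * s⁻¹ ^ l)
      = -(qPoch (s ^ 2) N * qPoch (s ^ 2) (N + 1)) := by
  have hz := inv_ne_zero hs0
  set R : ℂ → ℂ := fun z =>
    (∏ k ∈ Finset.range N, (1 - z * s ^ (2 * (k + 1) + 1)) * (1 - s ^ (2 * (k + 1) + 1) / z))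
      * (1 - s / z) with hRdef
  have hR : R s⁻¹ = qPoch (s ^ 2) N * qPoch (s ^ 2) (N + 1) := by
    have hfactor (k : ℕ) : 1 - s⁻¹ * s ^ (2 * k + 1) = 1 - (s ^ 2) ^ k := by
      rw [pow_succ', inv_mul_cancel_left₀ hs0, pow_mul]
    have hfactor' (k : ℕ) : 1 - s ^ (2 * k + 1) / s⁻¹ = 1 - (s ^ 2) ^ (k + 1) := by
      rw [div_inv_eq_mul, ← pow_succ, ← pow_mul, mul_add_one]
    have hlast : 1 - s / s⁻¹ = 1 - (s ^ 2) ^ (0 + 1) := by rw [← hfactor' 0, pow_one]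
    rw [qPoch, qPoch, Finset.prod_range_succ', ← mul_assoc, ← Finset.prod_mul_distrib]
    simp only [hRdef, hfactor, hfactor', hlast]
  have hdiff : DifferentiableAt ℂ R s⁻¹ :=
    .mul (.fun_finsetProd fun k _ => by fun_prop (disch := exact hz)) (by
      fun_prop (disch := exact hz))
  have hsum {z : ℂ} (hz : z ≠ 0) :
      ∑ l ∈ Finset.Icc (-(N + 1 : ℕ) : ℤ) (N + 1 : ℕ), tripleCoeff s (N + 1) l * z ^ l
        = (1 - z * s) * R z := by
    rw [← tsum_tripleCoeff_mul, (hasSum_tripleCoeff hs0 hs hz _).tsum_eq, Finset.prod_range_succ']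
    ring
  have hleft := HasDerivAt.fun_sum fun l (_ : l ∈ Finset.Icc (-(N + 1 : ℕ) : ℤ) (N + 1 : ℕ)) =>
    (hasDerivAt_zpow l s⁻¹ (.inl hz)).const_mul (tripleCoeff s (N + 1) l)
  have hright := (((hasDerivAt_id s⁻¹).mul_const s).const_sub 1).mul hdiff.hasDerivAt
  have hderiv := hleft.unique (hright.congr_of_eventuallyEq
    ((eventually_ne_nhds hz).mono fun z hz => hsum hz))
  simp only [id_eq, inv_mul_cancel₀ hs0, sub_self, zero_mul, add_zero, one_mul, hR,
    zpow_sub_one₀ hz, inv_inv] at hderiv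
  rw [tsum_tripleCoeff_mul]
  apply mul_left_cancel₀ hs0
  rw [mul_neg, ← neg_mul, ← hderiv, Finset.mul_sum]
  exact Finset.sum_congr rfl fun l _ => by ring

/-- Jacobi's identity for the cube of the Euler function. -/
lemma tsum_neg_one_zpow_mul_intCast {s : ℂ} (hs0 : s ≠ 0) (hs : ‖s‖ < 1) :
    ∑' l : ℤ, (-1) ^ l * s ^ (l ^ 2) * (l * s⁻¹ ^ l) = -eulerFn (s ^ 2) ^ 3 := by
  have hq := tendsto_qPoch (norm_sq_lt_one hs)
  rw [tsum_eq_of_tendsto_tsum_tripleCoeff hs (a := -(eulerFn (s ^ 2) * eulerFn (s ^ 2)))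
    (by simpa using summable_norm_zpow_sq_mul hs0 hs (inv_ne_zero hs0) 1)]
  · ring
  · rw [← tendsto_add_atTop_iff_nat 1]
    simp only [tsum_tripleCoeff_mul_intCast hs0 hs]
    exact (hq.mul (hq.comp (tendsto_add_atTop_nat 1))).neg

end TripleProduct

section EtaQuotient

open scoped Real

/-- The product `(q; q²)_∞` over the odd powers of `q`. -/
noncomputable def oddEulerFn (q : ℂ) : ℂ := ∏' k : ℕ, (1 - q ^ (2 * k + 1))

lemma multipliable_one_sub_pow_odd {q : ℂ} (hq : ‖q‖ < 1) :
    Multipliable fun k : ℕ => 1 - q ^ (2 * k + 1) := by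
  have hsum : Summable fun k : ℕ => ‖-q ^ (2 * k + 1)‖ := by
    simpa [pow_succ, pow_mul] using
      (summable_geometric_of_lt_one (norm_nonneg _) (norm_sq_lt_one hq)).mul_right ‖q‖
  simpa [sub_eq_add_neg] using multipliable_one_add_of_summable hsum

lemma eulerFn_eq_oddEulerFn_mul {q : ℂ} (hq : ‖q‖ < 1) :
    eulerFn q = oddEulerFn q * eulerFn (q ^ 2) := by
  have heven : ∀ k : ℕ, 1 - (q ^ 2) ^ (k + 1) = 1 - q ^ (2 * k + 1 + 1) := fun k => by ring
  have := tprod_even_mul_odd (f := fun n : ℕ => 1 - q ^ (n + 1)) (multipliable_one_sub_pow_odd hq)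
    (by simpa [heven] using ModularForm.multipliable_one_sub_pow (norm_sq_lt_one hq))
  simp only [eulerFn, oddEulerFn, heven, ← this]

lemma oddEulerFn_mul_neg {q : ℂ} (hq : ‖q‖ < 1) :
    oddEulerFn q * oddEulerFn (-q) = oddEulerFn (q ^ 2) := by
  unfold oddEulerFn
  rw [← (multipliable_one_sub_pow_odd hq).tprod_mul
    (multipliable_one_sub_pow_odd (q := -q) (by simpa using hq))]
  exact tprod_congr fun k => by rw [Odd.neg_pow ⟨k, rfl⟩]; ring

lemma eulerFn_sq_pow_three {q : ℂ} (hq : ‖q‖ < 1) :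
    eulerFn (q ^ 2) ^ 3 = eulerFn q * eulerFn (q ^ 4) * eulerFn (-q) := by
  have hneg := eulerFn_eq_oddEulerFn_mul (q := -q) (by simpa using hq)
  have hsq := eulerFn_eq_oddEulerFn_mul (norm_sq_lt_one hq)
  rw [neg_sq] at hneg
  rw [show (q ^ 2) ^ 2 = q ^ 4 by ring, ← oddEulerFn_mul_neg hq] at hsq
  rw [eulerFn_eq_oddEulerFn_mul hq, hneg]
  linear_combination eulerFn (q ^ 2) ^ 2 * hsq

lemma dedekindEta_eq (τ : ℂ) :
    dedekindEta τ = exp (π * I * τ / 12) * eulerFn (exp (2 * π * I * τ)) := by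
  unfold dedekindEta eulerFn
  congr! 3 with n
  rw [← exp_nat_mul]
  push_cast
  ring_nf

lemma norm_exp_pi_mul_I_mul_lt_one {c : ℝ} (hc : 0 < c) {z : ℂ} (hz : 0 < z.im) :
    ‖exp (c * π * I * z)‖ < 1 := by
  have hre : (c * π * I * z).re = -(c * π * z.im) := by simp
  rw [norm_exp, Real.exp_lt_one_iff, hre, neg_lt_zero]
  positivity

lemma E2fun_eq_exp_mul_eulerFn {z : ℂ} (hz : 0 < z.im) :
    E2fun z = exp (2 * π * I * z) * eulerFn (-exp (16 * π * I * z)) ^ 3 := by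
  set q := exp (16 * π * I * z) with hqdef
  have hq : ‖q‖ < 1 := by simpa using norm_exp_pi_mul_I_mul_lt_one (c := 16) (by norm_num) hz
  have hq4 : ‖q ^ 4‖ < 1 := by
    rw [norm_pow]
    exact pow_lt_one₀ (norm_nonneg _) hq (by norm_num)
  have h1 := eulerFn_ne_zero hq
  have h4 := eulerFn_ne_zero hq4
  have hnome (m n : ℕ) (hmn : m = 8 * n) : exp (2 * π * I * (m * z)) = q ^ n := by
    rw [hqdef, ← exp_nat_mul, hmn]
    push_cast
    ring_nf
  have e16 := hnome 16 2 rfl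
  have e8 := hnome 8 1 rfl
  have e32 := hnome 32 4 rfl
  have hprefactor : exp (π * I * (16 * z) / 12) ^ 9 = exp (2 * π * I * z)
      * (exp (π * I * (8 * z) / 12) ^ 3 * exp (π * I * (32 * z) / 12) ^ 3) := by
    simp only [← exp_nat_mul, ← exp_add]
    push_cast
    ring_nf
  push_cast at e16 e8 e32
  unfold E2fun
  rw [dedekindEta_eq, dedekindEta_eq, dedekindEta_eq, e16, e8, e32, pow_one, mul_pow, mul_pow,
    mul_pow, hprefactor, show 9 = 3 * 3 from rfl, pow_mul (eulerFn _), eulerFn_sq_pow_three hq]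
  field_simp [exp_ne_zero]

lemma hasSum_sum_residues {f : ℤ → ℂ} {a : ℂ} (h : HasSum f a) (n : ℕ) [NeZero n] :
    HasSum (fun k : ℤ => ∑ r : Fin n, f (k * n + (r : ℕ))) a :=
  ((Int.divModEquiv n).symm.hasSum_iff.mpr h).prod_fiberwise fun _ => hasSum_fintype _

lemma hasSum_reflected_residues_mod_four {f : ℤ → ℂ} {a : ℂ} (h : HasSum f a) :
    HasSum (fun k : ℤ => f (4 * k + 1) + f (1 - (4 * k + 1))
      + (f (4 * k + 2) + f (1 - (4 * k + 2)))) a := by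
  have hres (r : ℤ) : Summable fun k : ℤ => f (4 * k + r) :=
    h.summable.comp_injective fun k l hkl => by simpa using hkl
  have hsum := ((((hres 0).hasSum.add (hres 1).hasSum).add (hres 2).hasSum).add (hres 3).hasSum)
  have htotal := hsum.unique <| by
    simpa [Fin.sum_univ_four, mul_comm] using hasSum_sum_residues h 4
  have hrefl0 := (Equiv.neg ℤ).hasSum_iff.mpr (hres 0).hasSum
  have hrefl3 := (Equiv.subLeft (-1 : ℤ)).hasSum_iff.mpr (hres 3).hasSum
  rw [← htotal]
  convert! ((hres 1).hasSum.add hrefl0).add ((hres 2).hasSum.add hrefl3) using 1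
  · ext k
    simp only [Function.comp_apply, Equiv.neg_apply, Equiv.subLeft_apply]
    ring_nf
  · ring

lemma hasSum_eulerFn_sq_pow_three {s : ℂ} (hs0 : s ≠ 0) (hs : ‖s‖ < 1) :
    HasSum (fun k : ℤ => (8 * k + 1) * s ^ ((4 * k + 1) * (4 * k))
      - (8 * k + 3) * s ^ ((4 * k + 2) * (4 * k + 1))) (eulerFn (s ^ 2) ^ 3) := by
  have hsummable : Summable fun l : ℤ => (-1) ^ l * s ^ (l ^ 2) * (l * s⁻¹ ^ l) := by
    refine .of_norm ?_
    simpa using summable_norm_zpow_sq_mul hs0 hs (inv_ne_zero hs0) 1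
  have hjacobi := hsummable.hasSum
  rw [tsum_neg_one_zpow_mul_intCast hs0 hs] at hjacobi
  have hpair (l : ℤ) : (-1) ^ l * s ^ (l ^ 2) * (l * s⁻¹ ^ l)
      + (-1) ^ (1 - l) * s ^ ((1 - l) ^ 2) * ((1 - l : ℤ) * s⁻¹ ^ (1 - l))
        = (-1) ^ l * (2 * l - 1) * s ^ (l * (l - 1)) := by
    have hterm (m : ℤ) : s ^ (m ^ 2) * s⁻¹ ^ m = s ^ (m * (m - 1)) := by
      rw [inv_zpow', ← zpow_add₀ hs0]
      ring_nf
    have hsymm := hterm (1 - l)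
    rw [show (1 - l) * (1 - l - 1) = l * (l - 1) by ring] at hsymm
    rw [zpow_sub₀ (show (-1 : ℂ) ≠ 0 by norm_num), zpow_one, neg_div, one_div, ← inv_zpow,
      inv_neg_one]
    push_cast
    linear_combination (-1) ^ l * (l * hterm l - (1 - l) * hsymm)
  convert! (hasSum_reflected_residues_mod_four hjacobi).neg using 1
  · ext k
    rw [hpair, hpair, Odd.neg_one_zpow ⟨2 * k, by ring⟩, Even.neg_one_zpow ⟨2 * k + 1, by ring⟩]
    push_cast
    ring_nf
  · rw [neg_neg]

lemma exp_pi_mul_I_mul_intCast (n : ℤ) : exp (π * I * n) = (-1) ^ n := by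
  rw [mul_comm, exp_int_mul, exp_pi_mul_I]

lemma hasSum_E2fun {z : ℂ} (hz : 0 < z.im) :
    HasSum (fun k : ℤ => (8 * k + 1) * exp (2 * π * I * z * (8 * k + 1) ^ 2)
      + (8 * k + 3) * exp (2 * π * I * z * (8 * k + 3) ^ 2)) (E2fun z) := by
  set s := exp (8 * π * I * z + π * I / 2) with hsdef
  have hs2 : s ^ 2 = -exp (16 * π * I * z) := by
    rw [hsdef, ← exp_nat_mul, ← mul_neg_one, ← exp_pi_mul_I, ← exp_add]
    push_cast
    ring_nf
  have hs : ‖s‖ < 1 := by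
    rw [hsdef, exp_add, norm_mul, show (π * I / 2 : ℂ) = (π / 2 : ℝ) * I by push_cast; ring,
      norm_exp_ofReal_mul_I, mul_one]
    simpa using norm_exp_pi_mul_I_mul_lt_one (c := 8) (by norm_num) hz
  have hterm (l m : ℤ) (hm : l * (l - 1) = 2 * m) :
      exp (2 * π * I * z) * s ^ (l * (l - 1)) =
        (-1) ^ m * exp (2 * π * I * z * (2 * l - 1) ^ 2) := by
    have hm' : (l : ℂ) * (l - 1) = 2 * m := by exact_mod_cast hm
    rw [hsdef, ← exp_int_mul, ← exp_pi_mul_I_mul_intCast, ← exp_add, ← exp_add]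
    push_cast
    congr 1
    linear_combination π * I / 2 * hm'
  rw [E2fun_eq_exp_mul_eulerFn hz, ← hs2]
  convert! (hasSum_eulerFn_sq_pow_three (exp_ne_zero _) hs).mul_left (exp (2 * π * I * z)) using 1
  ext k
  have h1 := hterm (4 * k + 1) (2 * (k * (4 * k + 1))) (by ring)
  have h3 := hterm (4 * k + 2) (2 * (4 * k ^ 2 + 3 * k) + 1) (by ring)
  rw [even_two_mul _ |>.neg_one_zpow, add_sub_cancel_right] at h1
  rw [Odd.neg_one_zpow ⟨_, rfl⟩, show 4 * k + 2 - 1 = 4 * k + 1 by ring] at h3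
  push_cast at h1 h3
  rw [show 2 * (4 * k + 1) - 1 = (8 * k + 1 : ℂ) by ring] at h1
  rw [show 2 * (4 * k + 2) - 1 = (8 * k + 3 : ℂ) by ring] at h3
  linear_combination -(8 * k + 1) * h1 + (8 * k + 3) * h3

end EtaQuotient

section CosecantSeries

open scoped Real

/-- The symmetric folding `f 0, f 1 + f (-1), f 2 + f (-2), …` of a family indexed by `ℤ`. It serves
to sum families such as `1 / (z + k)` that only converge after `k` and `-k` are paired. -/
def symmFold (f : ℤ → ℂ) : ℕ → ℂ
  | 0 => f 0
  | n + 1 => f (n + 1) + f (-(n + 1))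

lemma hasSum_symmFold_of_succ {f : ℤ → ℂ} {a : ℂ}
    (h : HasSum (fun n : ℕ => f (n + 1) + f (-(n + 1))) (a - f 0)) : HasSum (symmFold f) a := by
  rw [← hasSum_nat_add_iff' 1]
  simpa [symmFold] using h

lemma hasSum_symmFold {f : ℤ → ℂ} {a : ℂ} (h : HasSum f a) : HasSum (symmFold f) a := by
  refine hasSum_symmFold_of_succ ?_
  have := (hasSum_nat_add_iff' 1).mpr h.nat_add_neg
  simpa using this

lemma hasSum_alternating_succ {f : ℕ → ℂ} {A O : ℂ} (h : HasSum f A)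
    (hodd : HasSum (fun m => f (2 * m + 1)) O) :
    HasSum (fun n => (-1) ^ (n + 1) * f n) (2 * O - A) := by
  have heven : Summable fun m => f (2 * m) :=
    h.summable.comp_injective (mul_right_injective₀ two_ne_zero)
  have hA : A = ∑' m, f (2 * m) + O := h.unique (heven.hasSum.even_add_odd hodd)
  have := HasSum.even_add_odd (f := fun n => (-1) ^ (n + 1) * f n)
    (by simpa [pow_succ, pow_mul] using heven.hasSum.neg)
    (by simpa [pow_succ, pow_mul] using hodd)
  convert! this using 1
  linear_combination -hA

lemma cot_half_sub_cot {w : ℂ} (hw : sin w ≠ 0) : cot (w / 2) - cot w = 1 / sin w := by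
  obtain ⟨v, rfl⟩ : ∃ v, w = 2 * v := ⟨w / 2, by ring⟩
  rw [sin_two_mul] at hw
  have hs : sin v ≠ 0 := fun h => hw (by simp [h])
  have hc : cos v ≠ 0 := fun h => hw (by simp [h])
  rw [mul_div_cancel_left₀ v two_ne_zero, cot, cot, sin_two_mul, cos_two_mul]
  field_simp
  ring

lemma hasSum_cotTerm {z : ℂ} (hz : z ∈ integerComplement) :
    HasSum (cotTerm z) (π * cot (π * z) - 1 / z) := by
  rw [cot_series_rep' hz]
  exact (summable_cotTerm hz).hasSum

lemma div_two_mem_integerComplement {z : ℂ} (hz : z ∈ integerComplement) :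
    z / 2 ∈ integerComplement := by
  rintro ⟨n, hn⟩
  exact hz ⟨2 * n, by push_cast; rw [hn]; ring⟩

lemma hasSum_symmFold_neg_one_zpow_div {z : ℂ} (hz : z ∈ integerComplement) :
    HasSum (symmFold fun k => (-1) ^ k / (z + k)) (π / sin (π * z)) := by
  have hodd : HasSum (fun m => cotTerm z (2 * m + 1))
      (1 / 2 * (π * cot (π * (z / 2)) - 1 / (z / 2))) := by
    refine ((hasSum_cotTerm (div_two_mem_integerComplement hz)).mul_left (1 / 2)).congr_fun
      fun m => ?_
    have hsub : z - ((2 * m + 1 : ℕ) + 1) = 2 * (z / 2 - (m + 1)) := by push_cast; ring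
    have hadd : z + ((2 * m + 1 : ℕ) + 1) = 2 * (z / 2 + (m + 1)) := by push_cast; ring
    rw [cotTerm, cotTerm, hsub, hadd, ← one_div_mul_one_div, ← one_div_mul_one_div]
    ring
  refine hasSum_symmFold_of_succ ?_
  convert! hasSum_alternating_succ (hasSum_cotTerm hz) hodd using 1
  · ext n
    have hsign : (-1 : ℂ) ^ (-((n : ℤ) + 1)) = (-1) ^ (n + 1) := by
      rw [zpow_neg, ← inv_zpow, inv_neg_one]; norm_cast
    have hsign' : (-1 : ℂ) ^ ((n : ℤ) + 1) = (-1) ^ (n + 1) := by norm_cast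
    rw [hsign, hsign', cotTerm]
    push_cast
    ring
  · have hcot := cot_half_sub_cot (sin_pi_mul_ne_zero hz)
    have hz0 := integerComplement.ne_zero hz
    rw [mul_div_assoc] at hcot
    simp only [zpow_zero, Int.cast_zero, add_zero]
    rw [div_eq_mul_one_div, ← hcot]
    field_simp
    ring

end CosecantSeries

section IntegralInterchange

open MeasureTheory Filter

lemma integrable_tsum_of_summable_integral_norm {α E : Type*} [MeasurableSpace α]
    {μ : Measure α} [NormedAddCommGroup E] [CompleteSpace E] {B : ℕ → α → E}
    (hB : ∀ n, Integrable (B n) μ) (hsum : Summable fun n => ∫ t, ‖B n t‖ ∂μ) :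
    Integrable (fun t => ∑' n, B n t) μ := by
  have hlint : ∫⁻ t, ∑' n, ‖B n t‖ₑ ∂μ ≠ ⊤ := by
    rw [lintegral_tsum fun n => (hB n).aestronglyMeasurable.enorm]
    simp only [← ofReal_integral_norm_eq_lintegral_enorm (hB _)]
    exact hsum.tsum_ofReal_ne_top
  have hae : ∀ᵐ t ∂μ, Summable fun n => ‖B n t‖ := by
    filter_upwards [ae_lt_top' (.tsum fun n => (hB n).aestronglyMeasurable.enorm) hlint]
      with t ht
    exact tsum_enorm_ne_top_iff_summable_norm.mp ht.ne
  refine ⟨aestronglyMeasurable_of_tendsto_ae atTop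
    (f := fun N t => ∑ n ∈ Finset.range N, B n t)
    (fun N => Finset.aestronglyMeasurable_fun_sum _ fun n _ => (hB n).aestronglyMeasurable) ?_, ?_⟩
  · filter_upwards [hae] with t ht using ht.of_norm.hasSum.tendsto_sum_nat
  · exact (lintegral_mono fun t => enorm_tsum_le_tsum_enorm).trans_lt hlint.lt_top

lemma hasSum_integral_mul_of_bounded {α : Type*} [MeasurableSpace α] {μ : Measure α}
    {B : ℕ → α → ℂ} (hB : ∀ n, Integrable (B n) μ) (hsum : Summable fun n => ∫ t, ‖B n t‖ ∂μ)
    {H : α → ℂ} (hH : AEStronglyMeasurable H μ) {C : ℝ} (hC : ∀ᵐ t ∂μ, ‖H t‖ ≤ C) :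
    HasSum (fun n => ∫ t, B n t * H t ∂μ) (∫ t, (∑' n, B n t) * H t ∂μ) := by
  simp only [← tsum_mul_right]
  refine hasSum_integral_of_summable_integral_norm (fun n => (hB n).mul_bdd hH hC) ?_
  refine .of_nonneg_of_le (fun n => by positivity) (fun n => ?_) (hsum.mul_right C)
  rw [← integral_mul_const]
  refine integral_mono_ae ((hB n).mul_bdd hH hC).norm ((hB n).norm.mul_const C) ?_
  filter_upwards [hC] with t ht
  rw [norm_mul]
  gcongr

lemma integral_mul_integral_comm {α β : Type*} [MeasurableSpace α] [MeasurableSpace β]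
    {μ : Measure α} {ν : Measure β} [SFinite μ] [SFinite ν] {f : α → ℂ} (hf : Integrable f μ)
    {g : β → ℂ} (hg : Integrable g ν) {K : α → β → ℂ}
    (hK : AEStronglyMeasurable (Function.uncurry K) (μ.prod ν)) {C : ℝ}
    (hC : ∀ᵐ t ∂μ, ∀ x, ‖K t x‖ ≤ C) :
    ∫ t, f t * ∫ x, K t x * g x ∂ν ∂μ = ∫ x, (∫ t, f t * K t x ∂μ) * g x ∂ν := by
  have hbdd : ∀ᵐ p ∂μ.prod ν, ‖K p.1 p.2‖ ≤ C := by
    filter_upwards [Measure.quasiMeasurePreserving_fst.ae hC] with p hp using hp p.2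
  have hint : Integrable (fun p : α × β => f p.1 * (K p.1 p.2 * g p.2)) (μ.prod ν) :=
    ((hf.mul_prod hg).bdd_mul hK hbdd).congr
      (.of_forall fun p => by simp only [Function.uncurry]; ring)
  simp only [← integral_const_mul, ← integral_mul_const, mul_assoc]
  exact integral_integral_swap hint

end IntegralInterchange

section OddGaussian

open MeasureTheory Set
open scoped Real

/-- The odd Gaussian `s e^{-πs²t}`, the summand of weight `3/2` unary theta functions. -/
noncomputable def oddGaussian (s t : ℝ) : ℝ := s * Real.exp (-(π * s ^ 2) * t)

lemma oddGaussian_neg (s t : ℝ) : oddGaussian (-s) t = -oddGaussian s t := by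
  simp [oddGaussian]

lemma pi_mul_sq_pos {s : ℝ} (hs : s ≠ 0) : 0 < π * s ^ 2 := by positivity

lemma integrableOn_oddGaussian (s : ℝ) : IntegrableOn (oddGaussian s) (Ioi 0) := by
  rcases eq_or_ne s 0 with rfl | hs
  · exact integrableOn_zero.congr_fun (fun t _ => by simp [oddGaussian]) measurableSet_Ioi
  · exact (integrableOn_exp_mul_Ioi (neg_lt_zero.mpr (pi_mul_sq_pos hs)) 0).const_mul s

lemma integral_oddGaussian_mul_exp {s : ℝ} (hs : s ≠ 0) (x : ℝ) :
    ∫ t in Ioi (0 : ℝ), (oddGaussian s t : ℂ) * exp (-π * x ^ 2 * t) =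
      1 / (2 * π) * (1 / (s + I * x) + 1 / (s - I * x)) := by
  have hc : (-(π * (s ^ 2 + x ^ 2)) : ℂ).re < 0 := by
    norm_cast
    rw [neg_lt_zero]
    positivity
  have hprod : (s + I * x : ℂ) * (s - I * x) = s ^ 2 + x ^ 2 := by
    linear_combination -(x : ℂ) ^ 2 * I_sq
  have hne : (s : ℂ) ^ 2 + x ^ 2 ≠ 0 := by
    norm_cast
    positivity
  have hplus : (s + I * x : ℂ) ≠ 0 := fun h => hne (by rw [← hprod, h, zero_mul])
  have hminus : (s - I * x : ℂ) ≠ 0 := fun h => hne (by rw [← hprod, h, mul_zero])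
  calc ∫ t in Ioi (0 : ℝ), (oddGaussian s t : ℂ) * exp (-π * x ^ 2 * t)
      = s * ∫ t in Ioi (0 : ℝ), exp (-(π * (s ^ 2 + x ^ 2)) * t) := by
        rw [← integral_const_mul]
        congr! 2
        rw [oddGaussian]
        push_cast
        rw [mul_assoc, ← exp_add]
        ring_nf
    _ = _ := by
        rw [integral_exp_mul_complex_Ioi hc]
        have := Real.pi_ne_zero
        rw [← hprod]
        simp only [ofReal_zero, mul_zero, exp_zero]
        field_simp
        ring

lemma norm_exp_neg_pi_mul_sq_mul_le_one (x : ℝ) {t : ℝ} (ht : 0 ≤ t) :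
    ‖exp (-π * x ^ 2 * t)‖ ≤ 1 := by
  have hreal : (-π * x ^ 2 * t : ℂ) = ((-(π * x ^ 2 * t) : ℝ) : ℂ) := by push_cast; ring
  rw [hreal, norm_exp_ofReal, Real.exp_le_one_iff, neg_nonpos]
  positivity

lemma integral_exp_neg_pi_sq {s : ℝ} (hs : s ≠ 0) :
    ∫ t in Ioi (0 : ℝ), Real.exp (-(π * s ^ 2) * t) = 1 / (π * s ^ 2) := by
  rw [integral_exp_mul_Ioi (neg_lt_zero.mpr (pi_mul_sq_pos hs))]
  simp [neg_div_neg_eq]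

lemma integral_abs_oddGaussian_sub_le {p q : ℝ} (hp : 0 < p) (hpq : p ≤ q) :
    ∫ t in Ioi (0 : ℝ), |oddGaussian q t - oddGaussian p t| ≤ 3 / π * ((q - p) / (p * q)) := by
  have hq : 0 < q := hp.trans_le hpq
  set E : ℝ → ℝ → ℝ := fun s t => Real.exp (-(π * s ^ 2) * t)
  have hE : ∀ {s : ℝ}, 0 < s → IntegrableOn (E s) (Ioi 0) := fun hs =>
    integrableOn_exp_mul_Ioi (neg_lt_zero.mpr (pi_mul_sq_pos hs.ne')) 0
  have hpt : ∀ t ∈ Ioi (0 : ℝ), |oddGaussian q t - oddGaussian p t| ≤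
      (q - p) * E q t + p * (E p t - E q t) := by
    intro t ht
    have hle : E q t ≤ E p t := Real.exp_le_exp.mpr <|
      mul_le_mul_of_nonneg_right (by gcongr) (le_of_lt ht)
    calc |oddGaussian q t - oddGaussian p t|
        = |(q - p) * E q t - p * (E p t - E q t)| := by congr 1; simp only [oddGaussian, E]; ring
      _ ≤ |(q - p) * E q t| + |p * (E p t - E q t)| := abs_sub _ _
      _ = _ := by
        rw [abs_of_nonneg (mul_nonneg (sub_nonneg.mpr hpq) (Real.exp_pos _).le),
          abs_of_nonneg (mul_nonneg hp.le (sub_nonneg.mpr hle))]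
  calc ∫ t in Ioi (0 : ℝ), |oddGaussian q t - oddGaussian p t|
      ≤ ∫ t in Ioi (0 : ℝ), ((q - p) * E q t + p * (E p t - E q t)) :=
        setIntegral_mono_on ((integrableOn_oddGaussian q).sub (integrableOn_oddGaussian p)).abs
          (((hE hq).const_mul _).add (((hE hp).sub (hE hq)).const_mul _)) measurableSet_Ioi hpt
    _ = (q - p) * (1 / (π * q ^ 2)) + p * (1 / (π * p ^ 2) - 1 / (π * q ^ 2)) := by
        rw [integral_add ((hE hq).const_mul _) (by exact ((hE hp).sub (hE hq)).const_mul _),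
          integral_const_mul, integral_const_mul, integral_sub (hE hp) (hE hq),
          integral_exp_neg_pi_sq hp.ne', integral_exp_neg_pi_sq hq.ne']
    _ = 1 / π * ((q - p) * (2 * p + q) / (p * q ^ 2)) := by
        field_simp
        ring
    _ ≤ 1 / π * ((q - p) * (3 * q) / (p * q ^ 2)) := by
        have := sub_nonneg.mpr hpq
        gcongr
        linarith
    _ = 3 / π * ((q - p) / (p * q)) := by field_simp

end OddGaussian

section AlternatingTheta

open MeasureTheory Set
open scoped Real

/-- The weight `3/2` theta function `∑ (-1)ᵏ (a + k) e^{-π(a + k)²t}`. -/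
noncomputable def alternatingTheta (a t : ℝ) : ℂ :=
  ∑' k : ℤ, (-1) ^ k * (oddGaussian (a + k) t : ℂ)

lemma hasSum_alternatingTheta (a : ℝ) {t : ℝ} (ht : 0 < t) :
    HasSum (fun k : ℤ => (-1) ^ k * (oddGaussian (a + k) t : ℂ)) (alternatingTheta a t) := by
  refine (Summable.of_norm ?_).hasSum
  refine (HurwitzZeta.hasSum_int_oddKernel a ht).summable.norm.congr fun k => ?_
  simp only [oddGaussian, norm_mul, norm_zpow, norm_neg, norm_one, one_zpow, one_mul, norm_real,
    add_comm a, neg_mul]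

lemma symmFold_oddGaussian_succ (a t : ℝ) (n : ℕ) :
    symmFold (fun k => (-1) ^ k * (oddGaussian (a + k) t : ℂ)) (n + 1) =
      (-1) ^ (n + 1) * ((oddGaussian (n + 1 + a) t - oddGaussian (n + 1 - a) t : ℝ) : ℂ) := by
  have hneg : a + -((n : ℝ) + 1) = -(n + 1 - a) := by ring
  have hsign : (-1 : ℂ) ^ (-((n : ℤ) + 1)) = (-1) ^ (n + 1) := by
    rw [zpow_neg, ← inv_zpow, inv_neg_one]; norm_cast
  simp only [symmFold]
  push_cast
  rw [hneg, oddGaussian_neg, hsign, add_comm a]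
  norm_cast
  push_cast
  ring

lemma integrableOn_symmFold_oddGaussian (a : ℝ) (n : ℕ) :
    IntegrableOn (fun t => symmFold (fun k => (-1) ^ k * (oddGaussian (a + k) t : ℂ)) n)
      (Ioi 0) := by
  have h : ∀ k : ℤ, IntegrableOn (fun t => (-1) ^ k * (oddGaussian (a + k) t : ℂ)) (Ioi 0) :=
    fun k => (integrableOn_oddGaussian _).ofReal.const_mul _
  cases n with
  | zero => exact h 0
  | succ n => exact (h _).add (h _)

lemma summable_integral_norm_symmFold_oddGaussian {a : ℝ} (ha0 : 0 < a) (ha1 : a < 1) :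
    Summable fun n => ∫ t in Ioi (0 : ℝ),
      ‖symmFold (fun k => (-1) ^ k * (oddGaussian (a + k) t : ℂ)) n‖ := by
  rw [← summable_nat_add_iff 1]
  have hsq : Summable fun n : ℕ => 1 / ((n + 1 : ℕ) : ℝ) ^ 2 :=
    (summable_nat_add_iff 1).mpr (Real.summable_one_div_nat_pow.mpr one_lt_two)
  refine .of_nonneg_of_le (fun n => by positivity) (fun n => ?_)
    (hsq.mul_left (3 / π * (2 * a / (1 - a ^ 2))))
  simp only [symmFold_oddGaussian_succ, norm_mul, norm_pow, norm_neg, norm_one, one_pow, one_mul,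
    norm_real, Real.norm_eq_abs]
  have hn : (0 : ℝ) ≤ n := n.cast_nonneg
  have ha2 : 0 < 1 - a ^ 2 := by nlinarith
  calc ∫ t in Ioi (0 : ℝ), |oddGaussian (n + 1 + a) t - oddGaussian (n + 1 - a) t|
      ≤ 3 / π * ((n + 1 + a - (n + 1 - a)) / ((n + 1 - a) * (n + 1 + a))) :=
        integral_abs_oddGaussian_sub_le (by linarith) (by linarith)
    _ ≤ 3 / π * (2 * a / ((1 - a ^ 2) * (n + 1) ^ 2)) := by
        refine mul_le_mul_of_nonneg_left (div_le_div₀ (by linarith) (by linarith) (by positivity)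
          ?_) (by positivity)
        nlinarith [mul_nonneg hn (sq_nonneg a), mul_nonneg (mul_nonneg hn hn) (sq_nonneg a)]
    _ = 3 / π * (2 * a / (1 - a ^ 2)) * (1 / ((n + 1 : ℕ) : ℝ) ^ 2) := by
        push_cast
        field_simp

lemma add_mul_I_mem_integerComplement {a : ℝ} (ha0 : 0 < a) (ha1 : a < 1) (x : ℝ) :
    (a + I * x : ℂ) ∈ integerComplement := by
  rintro ⟨n, hn⟩
  have hre : (n : ℝ) = a := by simpa using congr_arg re hn
  rw [← hre] at ha0 ha1
  norm_cast at ha0 ha1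
  omega

lemma integral_symmFold_oddGaussian_mul_exp {a : ℝ} (ha0 : 0 < a) (ha1 : a < 1) (x : ℝ) (n : ℕ) :
    ∫ t in Ioi (0 : ℝ), symmFold (fun k => (-1) ^ k * (oddGaussian (a + k) t : ℂ)) n *
        exp (-π * x ^ 2 * t) =
      1 / (2 * π) * (symmFold (fun k => (-1) ^ k / (a + I * x + k)) n +
        symmFold (fun k => (-1) ^ k / (a - I * x + k)) n) := by
  have hne : ∀ k : ℤ, a + k ≠ 0 := fun k h =>
    add_mul_I_mem_integerComplement ha0 ha1 0 ⟨-k, by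
      rw [ofReal_zero, mul_zero, add_zero, eq_neg_of_add_eq_zero_left h]; push_cast; rfl⟩
  have hterm : ∀ k : ℤ, ∫ t in Ioi (0 : ℝ), (-1) ^ k * (oddGaussian (a + k) t : ℂ) *
      exp (-π * x ^ 2 * t) =
        1 / (2 * π) * ((-1) ^ k / (a + I * x + k) + (-1) ^ k / (a - I * x + k)) := fun k => by
    simp only [mul_assoc ((-1 : ℂ) ^ k)]
    rw [integral_const_mul, integral_oddGaussian_mul_exp (hne k)]
    push_cast
    ring_nf
  have hint : ∀ k : ℤ, IntegrableOn (fun t => (-1) ^ k * (oddGaussian (a + k) t : ℂ) *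
      exp (-π * x ^ 2 * t)) (Ioi 0) := fun k => by
    refine ((integrableOn_oddGaussian _).ofReal.const_mul _).mul_bdd (c := 1)
      (by fun_prop) ((ae_restrict_mem measurableSet_Ioi).mono fun t ht => ?_)
    exact norm_exp_neg_pi_mul_sq_mul_le_one x (le_of_lt ht)
  cases n with
  | zero => exact hterm 0
  | succ n =>
    simp only [symmFold, add_mul]
    rw [integral_add (hint _) (hint _), hterm, hterm]
    ring

lemma alternatingTheta_eq_tsum_symmFold (a : ℝ) {t : ℝ} (ht : 0 < t) :
    alternatingTheta a t =
      ∑' n, symmFold (fun k => (-1) ^ k * (oddGaussian (a + k) t : ℂ)) n :=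
  (hasSum_symmFold (hasSum_alternatingTheta a ht)).tsum_eq.symm

lemma integrableOn_alternatingTheta {a : ℝ} (ha0 : 0 < a) (ha1 : a < 1) :
    IntegrableOn (alternatingTheta a) (Ioi 0) :=
  (integrable_tsum_of_summable_integral_norm (integrableOn_symmFold_oddGaussian a)
    (summable_integral_norm_symmFold_oddGaussian ha0 ha1)).congr <|
    (ae_restrict_mem measurableSet_Ioi).mono fun _ ht =>
      (alternatingTheta_eq_tsum_symmFold a ht).symm

lemma integral_alternatingTheta_mul_exp {a : ℝ} (ha0 : 0 < a) (ha1 : a < 1) (x : ℝ) :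
    ∫ t in Ioi (0 : ℝ), alternatingTheta a t * exp (-π * x ^ 2 * t) =
      1 / 2 * (1 / sin (π * (a + I * x)) + 1 / sin (π * (a - I * x))) := by
  have hplus := hasSum_symmFold_neg_one_zpow_div (add_mul_I_mem_integerComplement ha0 ha1 x)
  have hminus := hasSum_symmFold_neg_one_zpow_div (add_mul_I_mem_integerComplement ha0 ha1 (-x))
  rw [ofReal_neg, mul_neg, ← sub_eq_add_neg] at hminus
  have hsum := hasSum_integral_mul_of_bounded (integrableOn_symmFold_oddGaussian a)
    (summable_integral_norm_symmFold_oddGaussian ha0 ha1) (H := fun t => exp (-π * x ^ 2 * t))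
    (Continuous.aestronglyMeasurable (by fun_prop)) (C := 1)
    ((ae_restrict_mem measurableSet_Ioi).mono fun t ht =>
      norm_exp_neg_pi_mul_sq_mul_le_one x (le_of_lt ht))
  simp only [integral_symmFold_oddGaussian_mul_exp ha0 ha1] at hsum
  rw [setIntegral_congr_fun measurableSet_Ioi fun t ht => by
    rw [alternatingTheta_eq_tsum_symmFold a ht], hsum.unique ((hplus.add hminus).mul_left _)]
  have := Real.pi_ne_zero
  field_simp

theorem integral_alternatingTheta_mul {a : ℝ} (ha0 : 0 < a) (ha1 : a < 1) {φ : ℝ → ℂ}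
    (hφ : Integrable φ) :
    ∫ t in Ioi (0 : ℝ), alternatingTheta a t * ∫ x : ℝ, exp (-π * x ^ 2 * t) * φ x =
      ∫ x : ℝ, 1 / 2 * (1 / sin (π * (a + I * x)) + 1 / sin (π * (a - I * x))) * φ x := by
  rw [integral_mul_integral_comm (K := fun t x => exp (-π * x ^ 2 * t))
    (integrableOn_alternatingTheta ha0 ha1) hφ (Continuous.aestronglyMeasurable (by fun_prop))
    ((ae_restrict_mem measurableSet_Ioi).mono fun t ht x =>
      norm_exp_neg_pi_mul_sq_mul_le_one x (le_of_lt ht))]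
  simp only [integral_alternatingTheta_mul_exp ha0 ha1]

end AlternatingTheta

section Gaussian

open MeasureTheory
open scoped Real

lemma norm_cosh_add_mul_I_sq (x y : ℝ) :
    ‖cosh (x + y * I)‖ ^ 2 = Real.sinh x ^ 2 + Real.cos y ^ 2 := by
  have hsplit : cosh (x + y * I) =
      ((Real.cosh x * Real.cos y : ℝ) : ℂ) + ((Real.sinh x * Real.sin y : ℝ) : ℂ) * I := by
    rw [cosh_add, cosh_mul_I, sinh_mul_I]
    push_cast
    ring
  rw [hsplit, ← normSq_eq_norm_sq, normSq_add_mul_I]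
  linear_combination Real.cos y ^ 2 * Real.cosh_sq x +
    Real.sinh x ^ 2 * Real.sin_sq_add_cos_sq y

lemma abs_sinh_le_norm_cosh (x y : ℝ) : |Real.sinh x| ≤ ‖cosh (x + y * I)‖ := by
  refine abs_le_of_sq_le_sq ?_ (norm_nonneg _)
  rw [norm_cosh_add_mul_I_sq]
  exact le_add_of_nonneg_right (sq_nonneg _)

lemma abs_cos_le_norm_cosh (x y : ℝ) : |Real.cos y| ≤ ‖cosh (x + y * I)‖ := by
  refine abs_le_of_sq_le_sq ?_ (norm_nonneg _)
  rw [norm_cosh_add_mul_I_sq]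
  exact le_add_of_nonneg_left (sq_nonneg _)

lemma abs_cos_mul_cosh_le_norm_cosh (x y : ℝ) :
    |Real.cos y| * Real.cosh x ≤ ‖cosh (x + y * I)‖ := by
  rw [← abs_of_pos (Real.cosh_pos x), ← abs_mul]
  refine abs_le_of_sq_le_sq ?_ (norm_nonneg _)
  rw [norm_cosh_add_mul_I_sq, mul_pow, Real.cosh_sq]
  nlinarith [mul_le_of_le_one_left (sq_nonneg (Real.sinh x)) (Real.cos_sq_le_one y)]

lemma norm_exp_pi_mul_I_mul_sq (T : ℂ) (x : ℝ) :
    ‖exp (π * I * T * x ^ 2)‖ = Real.exp (-(π * T.im) * x ^ 2) := by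
  have hsplit : π * I * T * (x : ℂ) ^ 2 = ((π * x ^ 2 : ℝ) : ℂ) * (I * T) := by push_cast; ring
  rw [norm_exp, hsplit, re_ofReal_mul]
  simp
  ring

lemma integrable_exp_pi_mul_I_mul_sq {T : ℂ} (hT : 0 < T.im) :
    Integrable fun x : ℝ => exp (π * I * T * x ^ 2) :=
  (integrable_exp_neg_mul_sq (by positivity : 0 < π * T.im)).mono'
    (Continuous.aestronglyMeasurable (by fun_prop))
    (.of_forall fun x => (norm_exp_pi_mul_I_mul_sq T x).le)

lemma integral_exp_neg_pi_mul_sq {w : ℂ} (hw : 0 < w.re) :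
    ∫ x : ℝ, exp (-(π * w) * x ^ 2) = 1 / w ^ (1 / 2 : ℂ) := by
  have harg : w.arg ≠ π := (mem_slitPlane_iff_arg.mp (.inl hw)).1
  rw [integral_gaussian_complex (by rw [re_ofReal_mul]; positivity),
    div_mul_cancel_left₀ (ofReal_ne_zero.mpr Real.pi_ne_zero), inv_cpow _ _ harg, one_div (w ^ _)]

end Gaussian

section EichlerIntegral

open MeasureTheory Set
open scoped Real

lemma sin_le_norm_sin_pi_mul (a x : ℝ) : |Real.sin (π * a)| ≤ ‖sin (π * (a + I * x))‖ := by
  have hsin : sin (π * (a + I * x)) = cosh ((π * x : ℝ) + (π / 2 - π * a : ℝ) * I) := by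
    rw [← cos_mul_I, ← cos_pi_div_two_sub, ← cos_neg]
    congr 1
    push_cast
    linear_combination -((π : ℂ) / 2 - π * a) * I_sq
  rw [hsin, ← Real.cos_pi_div_two_sub]
  exact abs_cos_le_norm_cosh _ _

lemma integrable_div_sin_mul {a : ℝ} (ha0 : 0 < a) (ha1 : a < 1) {φ : ℝ → ℂ}
    (hφ : Integrable φ) : Integrable fun x : ℝ => 1 / sin (π * (a + I * x)) * φ x := by
  have hpos : 0 < |Real.sin (π * a)| :=
    abs_pos.mpr (Real.sin_pos_of_pos_of_lt_pi (by positivity)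
      (mul_lt_of_lt_one_right Real.pi_pos ha1)).ne'
  have hne : ∀ x : ℝ, sin (π * (a + I * x)) ≠ 0 := fun x =>
    norm_pos_iff.mp (hpos.trans_le (sin_le_norm_sin_pi_mul a x))
  refine hφ.bdd_mul (c := 1 / |Real.sin (π * a)|)
    (Continuous.aestronglyMeasurable (continuous_const.div (by fun_prop) hne))
    (.of_forall fun x => ?_)
  rw [norm_div, norm_one]
  exact one_div_le_one_div_of_le hpos (sin_le_norm_sin_pi_mul a x)

lemma integral_alternatingTheta_mul_of_even {a : ℝ} (ha0 : 0 < a) (ha1 : a < 1) {φ : ℝ → ℂ}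
    (hφ : Integrable φ) (heven : ∀ x, φ (-x) = φ x) :
    ∫ t in Ioi (0 : ℝ), alternatingTheta a t * ∫ x : ℝ, exp (-π * x ^ 2 * t) * φ x =
      ∫ x : ℝ, 1 / sin (π * (a + I * x)) * φ x := by
  have hint := integrable_div_sin_mul ha0 ha1 hφ
  have hneg : (fun x : ℝ => 1 / sin (π * (a + I * (-x : ℝ))) * φ (-x)) =
      fun x : ℝ => 1 / sin (π * (a - I * x)) * φ x := by
    ext x
    rw [heven, ofReal_neg, mul_neg, ← sub_eq_add_neg]
  have hint' := hint.comp_neg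
  have hrefl := integral_neg_eq_self (fun x : ℝ => 1 / sin (π * (a + I * x)) * φ x) volume
  rw [hneg] at hint' hrefl
  simp only [integral_alternatingTheta_mul ha0 ha1 hφ, add_mul, mul_assoc (1 / 2 : ℂ)]
  rw [integral_const_mul, integral_add hint hint', hrefl]
  ring

lemma one_div_cpow_half_eq_integral {T : ℂ} (hT : 0 < T.im) {t : ℝ} (ht : 0 < t) :
    1 / (t - I * T) ^ (1 / 2 : ℂ) =
      2 * ∫ x : ℝ, exp (-π * x ^ 2 * (4 * t : ℝ)) * exp (π * I * T * (2 * x : ℝ) ^ 2) := by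
  have hre : 0 < (t - I * T).re := by simpa using add_pos ht hT
  have hintegrand : ∀ x : ℝ, exp (-π * x ^ 2 * (4 * t : ℝ)) * exp (π * I * T * (2 * x : ℝ) ^ 2) =
      exp (-(π * (t - I * T)) * (2 * x : ℝ) ^ 2) := fun x => by
    rw [← exp_add]
    push_cast
    ring_nf
  simp only [hintegrand]
  rw [Measure.integral_comp_mul_left (fun x : ℝ => exp (-(π * (t - I * T)) * x ^ 2)) 2,
    integral_exp_neg_pi_mul_sq hre, abs_of_pos (by norm_num), real_smul]
  push_cast
  ring

theorem integral_alternatingTheta_div_cpow {a : ℝ} (ha0 : 0 < a) (ha1 : a < 1) {T : ℂ}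
    (hT : 0 < T.im) :
    ∫ t in Ioi (0 : ℝ), alternatingTheta a (4 * t) / (t - I * T) ^ (1 / 2 : ℂ) =
      1 / 2 * ∫ x : ℝ, 1 / sin (π * (a + I * x)) * exp (π * I * T * (2 * x : ℝ) ^ 2) := by
  have hφ : Integrable fun x : ℝ => exp (π * I * T * (2 * x : ℝ) ^ 2) :=
    (integrable_exp_pi_mul_I_mul_sq hT).comp_mul_left' two_ne_zero
  rw [← integral_alternatingTheta_mul_of_even ha0 ha1 hφ (by simp)]
  set f : ℝ → ℂ := fun t => alternatingTheta a t *
    ∫ x : ℝ, exp (-π * x ^ 2 * t) * exp (π * I * T * (2 * x : ℝ) ^ 2)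
  calc ∫ t in Ioi (0 : ℝ), alternatingTheta a (4 * t) / (t - I * T) ^ (1 / 2 : ℂ)
      = ∫ t in Ioi (0 : ℝ), 2 * f (4 * t) :=
        setIntegral_congr_fun measurableSet_Ioi fun t ht => by
          simp only [f]
          rw [div_eq_mul_one_div, one_div_cpow_half_eq_integral hT ht]
          ring
    _ = 1 / 2 * ∫ t in Ioi (0 : ℝ), f t := by
        rw [integral_const_mul, integral_comp_mul_left_Ioi f 0 four_pos, mul_zero, real_smul]
        push_cast
        ring

lemma integrableOn_alternatingTheta_div_cpow {a : ℝ} (ha0 : 0 < a) (ha1 : a < 1) {T : ℂ}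
    (hT : 0 < T.im) :
    IntegrableOn (fun t => alternatingTheta a (4 * t) / (t - I * T) ^ (1 / 2 : ℂ)) (Ioi 0) := by
  have hθ : IntegrableOn (fun t => alternatingTheta a (4 * t)) (Ioi 0) := by
    rw [integrableOn_Ioi_comp_mul_left_iff _ _ four_pos, mul_zero]
    exact integrableOn_alternatingTheta ha0 ha1
  refine hθ.mul_bdd (c := (T.im ^ (1 / 2 : ℝ))⁻¹)
    (Measurable.aestronglyMeasurable (by fun_prop))
    ((ae_restrict_mem measurableSet_Ioi).mono fun t ht => ?_)
  have hle : T.im ≤ ‖(t - I * T : ℂ)‖ := by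
    refine le_trans ?_ (re_le_norm _)
    simpa using le_of_lt ht
  have hnorm : ‖(t - I * T : ℂ) ^ (1 / 2 : ℂ)‖ = ‖(t - I * T : ℂ)‖ ^ (1 / 2 : ℝ) := by
    rw [← norm_cpow_real]
    push_cast
    rfl
  rw [norm_inv, hnorm]
  gcongr

lemma E2fun_eq_alternatingTheta {t : ℝ} (ht : 0 < t) :
    E2fun ((1 + I * t) / 32) = 8 * exp (π * I / 16) *
      (alternatingTheta (1 / 8) (4 * t) + I * alternatingTheta (3 / 8) (4 * t)) := by
  have hz : 0 < ((1 + I * t) / 32 : ℂ).im := by simpa using ht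
  have hpos : 0 < 4 * t := by positivity
  refine (hasSum_E2fun hz).unique ?_
  convert! ((hasSum_alternatingTheta (1 / 8) hpos).add
    ((hasSum_alternatingTheta (3 / 8) hpos).mul_left I)).mul_left (8 * exp (π * I / 16)) using 1
  ext k
  have hone : exp (2 * π * I * ((1 + I * t) / 32) * (8 * k + 1) ^ 2) =
      exp (π * I / 16) * (-1) ^ k * exp (-(π * (1 / 8 + k) ^ 2) * (4 * t)) := by
    have hsign : exp (π * I * ((4 * k ^ 2 + k : ℤ) : ℂ)) = (-1) ^ k := by
      rw [exp_pi_mul_I_mul_intCast, zpow_add₀ (by norm_num),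
        Even.neg_one_zpow ⟨2 * k ^ 2, by ring⟩, one_mul]
    rw [← hsign, ← exp_add, ← exp_add]
    congr 1
    push_cast
    linear_combination π * t * (8 * k + 1) ^ 2 / 16 * I_sq
  have hthree : exp (2 * π * I * ((1 + I * t) / 32) * (8 * k + 3) ^ 2) =
      exp (π * I / 16) * exp (π / 2 * I) * (-1) ^ k * exp (-(π * (3 / 8 + k) ^ 2) * (4 * t)) := by
    have hsign : exp (π * I * ((4 * k ^ 2 + 2 * k + k : ℤ) : ℂ)) = (-1) ^ k := by
      rw [exp_pi_mul_I_mul_intCast, zpow_add₀ (by norm_num),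
        Even.neg_one_zpow ⟨2 * k ^ 2 + k, by ring⟩, one_mul]
    rw [← hsign, ← exp_add, ← exp_add, ← exp_add]
    congr 1
    push_cast
    linear_combination π * t * (8 * k + 3) ^ 2 / 16 * I_sq
  rw [hone, hthree, exp_pi_div_two_mul_I]
  simp only [oddGaussian]
  push_cast
  ring

lemma one_div_sin_add_I_mul_one_div_cos {α : ℂ} (hα : sin (2 * α) ≠ 0) :
    1 / sin α + I * (1 / cos α) = 2 * exp (α * I) / sin (2 * α) := by
  rw [sin_two_mul] at hα ⊢
  have hs : sin α ≠ 0 := fun h => hα (by simp [h])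
  have hc : cos α ≠ 0 := fun h => hα (by simp [h])
  rw [exp_mul_I]
  field_simp

lemma one_div_sin_eighth_add (x : ℝ) :
    1 / sin (π * ((1 / 8 : ℝ) + I * x)) + I * (1 / sin (π * ((3 / 8 : ℝ) + I * (-x : ℝ)))) =
      2 * exp (π * I / 8) * (exp (-(π * (2 * x : ℝ)) / 2) / cosh (π * ((2 * x : ℝ) + I / 4))) := by
  have hne : sin (2 * (π * ((1 / 8 : ℝ) + I * x))) ≠ 0 := by
    convert sin_pi_mul_ne_zero (add_mul_I_mem_integerComplement (a := 1 / 4) (by norm_num)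
      (by norm_num) (2 * x)) using 2
    push_cast
    ring
  have hcos : sin (π * ((3 / 8 : ℝ) + I * (-x : ℝ))) = cos (π * ((1 / 8 : ℝ) + I * x)) := by
    rw [← sin_pi_div_two_sub]
    congr 1
    push_cast
    ring
  have hcosh : sin (2 * (π * ((1 / 8 : ℝ) + I * x))) = cosh (π * ((2 * x : ℝ) + I / 4)) := by
    rw [← cos_mul_I, ← cos_pi_div_two_sub, ← cos_neg]
    congr 1
    push_cast
    linear_combination -(π : ℂ) / 4 * I_sq
  have hexp : exp (π * ((1 / 8 : ℝ) + I * x) * I) =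
      exp (π * I / 8) * exp (-(π * (2 * x : ℝ)) / 2) := by
    rw [← exp_add]
    congr 1
    push_cast
    linear_combination π * x * I_sq
  rw [hcos, one_div_sin_add_I_mul_one_div_cos hne, hcosh, hexp]
  ring

lemma integral_div_sin_eighth_add {φ : ℝ → ℂ} (hφ : Integrable φ)
    (heven : ∀ x, φ (-x) = φ x) :
    (∫ x : ℝ, 1 / sin (π * ((1 / 8 : ℝ) + I * x)) * φ (2 * x)) +
        I * ∫ x : ℝ, 1 / sin (π * ((3 / 8 : ℝ) + I * x)) * φ (2 * x) =
      exp (π * I / 8) * ∫ x : ℝ, exp (-(π * x) / 2) / cosh (π * (x + I / 4)) * φ x := by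
  have hφ2 : Integrable fun x => φ (2 * x) := hφ.comp_mul_left' two_ne_zero
  have hint := integrable_div_sin_mul (a := 1 / 8) (by norm_num) (by norm_num) hφ2
  have hint' := ((integrable_div_sin_mul (a := 3 / 8) (by norm_num) (by norm_num)
    hφ2).comp_neg).const_mul I
  rw [← integral_neg_eq_self (fun x : ℝ => 1 / sin (π * ((3 / 8 : ℝ) + I * x)) * φ (2 * x)),
    ← integral_const_mul, ← integral_add hint hint']
  calc ∫ x : ℝ, (1 / sin (π * ((1 / 8 : ℝ) + I * x)) * φ (2 * x) +
        I * (1 / sin (π * ((3 / 8 : ℝ) + I * (-x : ℝ))) * φ (2 * -x)))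
      = ∫ x : ℝ, 2 * exp (π * I / 8) * (exp (-(π * (2 * x : ℝ)) / 2) /
          cosh (π * ((2 * x : ℝ) + I / 4)) * φ (2 * x)) := by
        congr! 2 with x
        rw [mul_neg 2 x, heven, ← mul_assoc I, ← add_mul, one_div_sin_eighth_add, mul_assoc]
    _ = _ := by
        rw [integral_const_mul, Measure.integral_comp_mul_left
          (fun x : ℝ => exp (-(π * x) / 2) / cosh (π * (x + I / 4)) * φ x) 2,
          abs_of_pos (by norm_num), real_smul]
        push_cast
        ring

theorem integral_E2fun_div_cpow {τ : ℂ} (hτ : 0 < τ.im) :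
    ∫ t in Ioi (0 : ℝ), E2fun ((1 + I * t) / 32) / (-I * (1 + I * t + τ)) ^ (1 / 2 : ℂ) =
      4 * exp (3 * π * I / 16) * ∫ x : ℝ, exp (-(π * x) / 2) / cosh (π * (x + I / 4)) *
        exp (π * I * (τ + 1) * x ^ 2) := by
  have hT : 0 < (τ + 1).im := by simpa using hτ
  have hint := integrableOn_alternatingTheta_div_cpow (a := 1 / 8) (by norm_num) (by norm_num) hT
  have hint' := integrableOn_alternatingTheta_div_cpow (a := 3 / 8) (by norm_num) (by norm_num) hT
  have hexp : exp (3 * π * I / 16) = exp (π * I / 16) * exp (π * I / 8) := by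
    rw [← exp_add]
    ring_nf
  calc ∫ t in Ioi (0 : ℝ), E2fun ((1 + I * t) / 32) / (-I * (1 + I * t + τ)) ^ (1 / 2 : ℂ)
      = ∫ t in Ioi (0 : ℝ), 8 * exp (π * I / 16) *
          (alternatingTheta (1 / 8) (4 * t) / (t - I * (τ + 1)) ^ (1 / 2 : ℂ) +
            I * (alternatingTheta (3 / 8) (4 * t) / (t - I * (τ + 1)) ^ (1 / 2 : ℂ))) :=
        setIntegral_congr_fun measurableSet_Ioi fun t ht => by
          have hbase : -I * (1 + I * t + τ) = t - I * (τ + 1) := by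
            linear_combination -(t : ℂ) * I_sq
          rw [E2fun_eq_alternatingTheta ht, hbase]
          ring
    _ = _ := by
        have hsum := integral_div_sin_eighth_add (integrable_exp_pi_mul_I_mul_sq hT) (by simp)
        rw [integral_const_mul, integral_add hint (hint'.const_mul I), integral_const_mul,
          integral_alternatingTheta_div_cpow (by norm_num) (by norm_num) hT,
          integral_alternatingTheta_div_cpow (by norm_num) (by norm_num) hT, hexp]
        linear_combination 4 * exp (π * I / 16) * hsum

end EichlerIntegral

section ContourShift

open MeasureTheory Set Filter Topology

lemma norm_intervalIntegral_sub_intervalIntegral_add_mul_I_le {f : ℂ → ℂ} {a R M : ℝ} (ha : 0 ≤ a)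
    (hf : ∀ w : ℂ, 0 ≤ w.im → w.im ≤ a → DifferentiableAt ℂ f w)
    (hM : ∀ w : ℂ, 0 ≤ w.im → w.im ≤ a → |w.re| = |R| → ‖f w‖ ≤ M) :
    ‖(∫ x in (-R)..R, f x) - ∫ x in (-R)..R, f (x + a * I)‖ ≤ 2 * (M * a) := by
  have hrect := integral_boundary_rect_eq_zero_of_differentiableOn f ((-R : ℝ) : ℂ) (R + a * I)
    fun w hw => by
      have him : 0 ≤ w.im ∧ w.im ≤ a := by simpa [uIcc_of_le ha] using (mem_reProdIm.mp hw).2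
      exact (hf w him.1 him.2).differentiableWithinAt
  simp only [ofReal_re, ofReal_im, add_re, add_im, mul_re, mul_im, I_re, I_im, mul_zero, mul_one,
    zero_mul, sub_zero, add_zero, zero_add, ofReal_zero, smul_eq_mul] at hrect
  have hside : ∀ x : ℝ, |x| = |R| → ‖∫ y in (0 : ℝ)..a, f (x + y * I)‖ ≤ M * a := fun x hx => by
    have h := intervalIntegral.norm_integral_le_of_norm_le_const (a := 0) (b := a) (C := M)
      (f := fun y : ℝ => f (x + y * I)) fun y hy => by
        rw [uIoc_of_le ha] at hy
        exact hM _ (by simpa using hy.1.le) (by simpa using hy.2) (by simpa using hx)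
    rwa [sub_zero, abs_of_nonneg ha] at h
  calc ‖(∫ x in (-R)..R, f x) - ∫ x in (-R)..R, f (x + a * I)‖
      = ‖I * (∫ y in (0 : ℝ)..a, f ((-R : ℝ) + y * I)) -
          I * ∫ y in (0 : ℝ)..a, f (R + y * I)‖ := by
        congr 1
        linear_combination hrect
    _ ≤ M * a + M * a := by
        refine (norm_sub_le _ _).trans ?_
        rw [norm_mul, norm_mul, norm_I, one_mul, one_mul]
        exact add_le_add (hside _ (abs_neg R)) (hside _ rfl)
    _ = 2 * (M * a) := (two_mul _).symm

theorem integral_eq_integral_add_mul_I {f : ℂ → ℂ} {a : ℝ} (ha : 0 ≤ a)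
    (hf : ∀ w : ℂ, 0 ≤ w.im → w.im ≤ a → DifferentiableAt ℂ f w) {B : ℝ → ℝ}
    (hB : ∀ w : ℂ, 0 ≤ w.im → w.im ≤ a → 1 ≤ |w.re| → ‖f w‖ ≤ B |w.re|)
    (hB0 : Tendsto B atTop (𝓝 0)) (hint : Integrable fun x : ℝ => f x)
    (hint' : Integrable fun x : ℝ => f (x + a * I)) :
    ∫ x : ℝ, f x = ∫ x : ℝ, f (x + a * I) := by
  refine sub_eq_zero.mp (tendsto_nhds_unique
    ((intervalIntegral_tendsto_integral hint tendsto_neg_atTop_atBot tendsto_id).sub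
      (intervalIntegral_tendsto_integral hint' tendsto_neg_atTop_atBot tendsto_id)) ?_)
  refine squeeze_zero_norm' (a := fun R => 2 * (B R * a)) ?_
    (by simpa using (hB0.mul_const a).const_mul 2)
  filter_upwards [eventually_ge_atTop 1] with R hR
  refine norm_intervalIntegral_sub_intervalIntegral_add_mul_I_le ha hf fun w h0 h1 hw => ?_
  rw [abs_of_nonneg (zero_le_one.trans hR)] at hw
  exact hw ▸ hB w h0 h1 (hw ▸ hR)

end ContourShift

section HyperbolicSecant

open MeasureTheory Set Filter Topology
open scoped Real

lemma one_add_sq_le_cosh_pi_mul (x : ℝ) : 1 + x ^ 2 ≤ Real.cosh (π * x) := by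
  have hcosh : Real.cosh (π * x) = 1 + 2 * Real.sinh (π * x / 2) ^ 2 := by
    rw [show π * x = 2 * (π * x / 2) by ring, Real.cosh_two_mul, Real.cosh_sq]
    ring_nf
  have hsinh : (π * x / 2) ^ 2 ≤ Real.sinh (π * x / 2) ^ 2 := by
    rw [sq_le_sq, Real.abs_sinh]
    exact Real.self_le_sinh_iff.mpr (abs_nonneg _)
  have hpi : 9 ≤ π ^ 2 := by nlinarith [Real.pi_gt_three]
  nlinarith [sq_nonneg x]

lemma integrable_one_div_cosh_pi_mul : Integrable fun x : ℝ => 1 / Real.cosh (π * x) := by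
  refine integrable_inv_one_add_sq.mono' (Continuous.aestronglyMeasurable ?_)
    (.of_forall fun x => ?_)
  · exact continuous_const.div (by fun_prop) fun x => (Real.cosh_pos _).ne'
  · rw [Real.norm_of_nonneg (one_div_nonneg.mpr (Real.cosh_pos _).le), ← one_div]
    exact one_div_le_one_div_of_le (by positivity) (one_add_sq_le_cosh_pi_mul x)

lemma hasDerivAt_arctan_sinh_pi_mul (x : ℝ) :
    HasDerivAt (fun x => 1 / π * Real.arctan (Real.sinh (π * x))) (1 / Real.cosh (π * x)) x := by
  have hlin : HasDerivAt (fun x => π * x) π x := by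
    simpa using (hasDerivAt_id x).const_mul π
  refine (hlin.sinh.arctan.const_mul (1 / π)).congr_deriv ?_
  have := Real.cosh_pos (π * x)
  rw [add_comm, ← Real.cosh_sq]
  field_simp

lemma integral_one_div_cosh_pi_mul : ∫ x : ℝ, 1 / Real.cosh (π * x) = 1 := by
  have htop : Tendsto (fun x => Real.sinh (π * x)) atTop atTop := by
    refine tendsto_atTop_mono' _ ?_ (tendsto_id.const_mul_atTop Real.pi_pos)
    filter_upwards [eventually_ge_atTop 0] with x hx
    exact Real.self_le_sinh_iff.mpr (mul_nonneg Real.pi_pos.le hx)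
  have hbot : Tendsto (fun x => Real.sinh (π * x)) atBot atBot :=
    (tendsto_neg_atTop_atBot.comp (htop.comp tendsto_neg_atBot_atTop)).congr fun x => by simp
  rw [integral_of_hasDerivAt_of_tendsto hasDerivAt_arctan_sinh_pi_mul
    integrable_one_div_cosh_pi_mul
    (((tendsto_nhds_of_tendsto_nhdsWithin Real.tendsto_arctan_atBot).comp hbot).const_mul (1 / π))
    (((tendsto_nhds_of_tendsto_nhdsWithin Real.tendsto_arctan_atTop).comp htop).const_mul (1 / π))]
  field_simp
  norm_num

lemma integrable_one_div_ccosh_pi_mul : Integrable fun x : ℝ => 1 / cosh (π * x) :=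
  (integrable_one_div_cosh_pi_mul.ofReal (𝕜 := ℂ)).congr (.of_forall fun x => by simp)

lemma integral_one_div_ccosh_pi_mul : ∫ x : ℝ, 1 / cosh (π * x) = 1 := by
  have h := congrArg ofReal integral_one_div_cosh_pi_mul
  rw [← integral_complex_ofReal] at h
  simpa using h

lemma one_le_norm_cosh_pi_mul (x : ℝ) : 1 ≤ ‖cosh (π * x)‖ := by
  simpa using abs_cos_le_norm_cosh (π * x) 0

lemma cosh_pi_mul_ne_zero (x : ℝ) : cosh (π * x) ≠ 0 :=
  norm_pos_iff.mp (one_pos.trans_le (one_le_norm_cosh_pi_mul x))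

lemma ofReal_mul_re_add_ofReal_mul_im_mul_I (r : ℝ) (w : ℂ) :
    ((r * w.re : ℝ) : ℂ) + (r * w.im : ℝ) * I = r * w := by
  conv_rhs => rw [← re_add_im w]
  push_cast
  ring

lemma abs_re_le_norm_cosh_pi_mul (w : ℂ) : |w.re| ≤ ‖cosh (π * w)‖ := by
  rw [← ofReal_mul_re_add_ofReal_mul_im_mul_I]
  refine le_trans ?_ (abs_sinh_le_norm_cosh _ _)
  rw [Real.abs_sinh, abs_mul, abs_of_pos Real.pi_pos]
  refine le_trans ?_ (Real.self_le_sinh_iff.mpr (by positivity))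
  nlinarith [abs_nonneg w.re, Real.pi_gt_three]

lemma eq_I_div_two_of_cosh_pi_mul_eq_zero {w : ℂ} (h0 : 0 ≤ w.im) (h1 : w.im ≤ 1)
    (hw : cosh (π * w) = 0) : w = I / 2 := by
  have hsq := norm_cosh_add_mul_I_sq (π * w.re) (π * w.im)
  rw [ofReal_mul_re_add_ofReal_mul_im_mul_I, hw, norm_zero, zero_pow two_ne_zero, eq_comm,
    add_eq_zero_iff_of_nonneg (sq_nonneg _) (sq_nonneg _), sq_eq_zero_iff, sq_eq_zero_iff,
    Real.sinh_eq_zero] at hsq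
  have hre : w.re = 0 := (mul_eq_zero.mp hsq.1).resolve_left Real.pi_ne_zero
  have him : π * w.im = π / 2 := Real.injOn_cos
    ⟨by positivity, by nlinarith [Real.pi_pos]⟩ ⟨by positivity, by linarith [Real.pi_pos]⟩
    (hsq.2.trans Real.cos_pi_div_two.symm)
  have him' : w.im = 1 / 2 := mul_left_cancel₀ Real.pi_ne_zero (by linarith)
  apply Complex.ext <;> simp [hre, him']

lemma integrable_div_cosh_pi_mul {φ : ℝ → ℂ} (hφ : Continuous φ) {C : ℝ} (hC : ∀ x, ‖φ x‖ ≤ C) :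
    Integrable fun x : ℝ => φ x / cosh (π * x) := by
  simp_rw [div_eq_mul_one_div (φ _)]
  exact integrable_one_div_ccosh_pi_mul.bdd_mul hφ.aestronglyMeasurable (.of_forall hC)

lemma integrable_div_cosh_pi_mul_add_mul_I {φ : ℝ → ℂ} (hφ : Continuous φ) {C : ℝ}
    (hC : ∀ x, ‖φ x‖ ≤ C) {a : ℝ} (ha : Real.cos (π * a) ≠ 0) :
    Integrable fun x : ℝ => φ x / cosh (π * (x + a * I)) := by
  have hbound : ∀ x : ℝ, |Real.cos (π * a)| * ‖cosh (π * x)‖ ≤ ‖cosh (π * (x + a * I))‖ :=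
    fun x => by
      have h := abs_cos_mul_cosh_le_norm_cosh (π * x) (π * a)
      rw [← ofReal_mul, ← ofReal_cosh, norm_real, Real.norm_of_nonneg (Real.cosh_pos _).le]
      convert! h using 3
      push_cast
      ring
  have hpos : ∀ x : ℝ, 0 < ‖cosh (π * (x + a * I))‖ := fun x =>
    (mul_pos (abs_pos.mpr ha) (norm_pos_iff.mpr (cosh_pi_mul_ne_zero x))).trans_le (hbound x)
  have hne : ∀ x : ℝ, cosh (π * (x + a * I)) ≠ 0 := fun x => norm_pos_iff.mp (hpos x)
  have hint := integrable_div_cosh_pi_mul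
    (φ := fun x => φ x * (cosh (π * x) / cosh (π * (x + a * I)))) (C := C * |Real.cos (π * a)|⁻¹)
    (hφ.mul (Continuous.div (by fun_prop) (by fun_prop) hne)) fun x => by
      rw [norm_mul, norm_div]
      refine mul_le_mul (hC x) ?_ (by positivity) ((norm_nonneg _).trans (hC x))
      rw [div_le_iff₀ (hpos x), ← div_eq_inv_mul, le_div_iff₀' (abs_pos.mpr ha)]
      exact hbound x
  refine hint.congr (.of_forall fun x => ?_)
  have := hne x
  have := cosh_pi_mul_ne_zero x
  field_simp

end HyperbolicSecant

section ResidueAtHalf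

open MeasureTheory Set Filter Topology
open scoped Real

lemma dslope_div_dslope_of_ne {F G : ℂ → ℂ} {c w : ℂ} (hc : G c = 0) (hw : w ≠ c) :
    dslope F c w / dslope G c w = (F w - F c) / G w := by
  rw [dslope_of_ne _ hw, dslope_of_ne _ hw, slope_def_field, slope_def_field, hc, sub_zero,
    div_div_div_cancel_right₀ (sub_ne_zero.mpr hw)]

lemma differentiableAt_dslope_div_dslope {F G : ℂ → ℂ} (hF : Differentiable ℂ F)
    (hG : Differentiable ℂ G) {c w : ℂ} (hc : G c = 0) (hc' : deriv G c ≠ 0)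
    (hw : G w = 0 → w = c) : DifferentiableAt ℂ (fun w => dslope F c w / dslope G c w) w := by
  have hds : ∀ {H : ℂ → ℂ}, Differentiable ℂ H → DifferentiableAt ℂ (dslope H c) w := fun hH =>
    ((differentiableOn_dslope univ_mem).mpr hH.differentiableOn).differentiableAt univ_mem
  refine (hds hF).div (hds hG) ?_
  rcases eq_or_ne w c with rfl | hwc
  · rwa [dslope_same]
  · rw [dslope_of_ne _ hwc, slope_def_field, hc, sub_zero]
    exact div_ne_zero (mt hw hwc) (sub_ne_zero.mpr hwc)

lemma cosh_pi_mul_I_div_two : cosh (π * (I / 2)) = 0 := by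
  rw [show (π : ℂ) * (I / 2) = π / 2 * I by ring, cosh_mul_I, cos_pi_div_two]

lemma hasDerivAt_cosh_pi_mul_I_div_two :
    HasDerivAt (fun w => cosh (π * w)) (π * I) (I / 2) := by
  have hlin : HasDerivAt (fun w : ℂ => π * w) (π : ℂ) (I / 2) := by
    simpa using (hasDerivAt_id (I / 2)).const_mul (π : ℂ)
  refine hlin.ccosh.congr_deriv ?_
  rw [show (π : ℂ) * (I / 2) = π / 2 * I by ring, sinh_mul_I, sin_pi_div_two]
  ring

lemma cosh_pi_mul_add_I (w : ℂ) : cosh (π * (w + I)) = -cosh (π * w) := by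
  rw [mul_add, cosh_add, cosh_mul_I, sinh_mul_I]
  simp

/- This is the residue theorem for the pole `I / 2` of `1 / cosh (π w)`; subtracting the value of
`F` there removes the pole, so that only a contour shift is needed. -/
theorem integral_div_cosh_add_integral_add_I_div_cosh {F : ℂ → ℂ} (hF : Differentiable ℂ F)
    {C : ℝ} (hC : ∀ w : ℂ, 0 ≤ w.im → w.im ≤ 1 → ‖F w‖ ≤ C) :
    (∫ x : ℝ, F x / cosh (π * x)) + ∫ x : ℝ, F (x + I) / cosh (π * x) = 2 * F (I / 2) := by
  have hint : Integrable fun x : ℝ => F x / cosh (π * x) :=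
    integrable_div_cosh_pi_mul (by have := hF.continuous; fun_prop)
      fun x => hC x (by simp) (by simp)
  have hint' : Integrable fun x : ℝ => F (x + I) / cosh (π * x) :=
    integrable_div_cosh_pi_mul (by have := hF.continuous; fun_prop)
      fun x => hC (x + I) (by simp) (by simp)
  have hres := integrable_one_div_ccosh_pi_mul.const_mul (F (I / 2))
  set f : ℂ → ℂ := fun w => dslope F (I / 2) w / dslope (fun w => cosh (π * w)) (I / 2) w
  have hf : ∀ w, w ≠ I / 2 → f w = (F w - F (I / 2)) / cosh (π * w) := fun w =>
    dslope_div_dslope_of_ne cosh_pi_mul_I_div_two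
  have hfd : ∀ w : ℂ, 0 ≤ w.im → w.im ≤ 1 → DifferentiableAt ℂ f w := fun w h0 h1 =>
    differentiableAt_dslope_div_dslope hF (by fun_prop) cosh_pi_mul_I_div_two
      (by rw [hasDerivAt_cosh_pi_mul_I_div_two.deriv]; simp)
      (eq_I_div_two_of_cosh_pi_mul_eq_zero h0 h1)
  have hbot : ∀ x : ℝ, f x = F x / cosh (π * x) - F (I / 2) * (1 / cosh (π * x)) := fun x => by
    rw [hf x fun h => by simpa using congrArg im h]
    ring
  have htop : ∀ x : ℝ, f (x + (1 : ℝ) * I) =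
      F (I / 2) * (1 / cosh (π * x)) - F (x + I) / cosh (π * x) := fun x => by
    rw [ofReal_one, one_mul, hf _ fun h => by have := congrArg im h; norm_num at this,
      cosh_pi_mul_add_I]
    ring
  have hbound : ∀ w : ℂ, 0 ≤ w.im → w.im ≤ 1 → 1 ≤ |w.re| → ‖f w‖ ≤ 2 * C / |w.re| :=
    fun w h0 h1 hw => by
      rw [hf w fun h => by rw [h] at hw; norm_num at hw, norm_div]
      have hF2 : ‖F w - F (I / 2)‖ ≤ 2 * C := (norm_sub_le _ _).trans <| by
        linarith [hC w h0 h1, hC (I / 2) (by simp) (by norm_num)]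
      exact div_le_div₀ ((norm_nonneg _).trans hF2) hF2 (by positivity)
        (abs_re_le_norm_cosh_pi_mul w)
  have hshift := integral_eq_integral_add_mul_I zero_le_one hfd hbound
    (tendsto_const_nhds.div_atTop tendsto_id)
    ((hint.sub hres).congr (.of_forall fun x => (hbot x).symm))
    ((hres.sub hint').congr (.of_forall fun x => (htop x).symm))
  simp_rw [hbot, htop] at hshift
  rw [integral_sub hint hres, integral_sub hres hint', integral_const_mul,
    integral_one_div_ccosh_pi_mul] at hshift
  linear_combination hshift

end ResidueAtHalf

section MordellIntegral

open MeasureTheory Set Filter Topology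
open scoped Real

/-- The Gaussian `w ↦ exp (πi T w² - 2π z w)` in the numerator of the Mordell integral. -/
noncomputable def mordellKernel (T z w : ℂ) : ℂ := exp (π * I * T * w ^ 2 - 2 * π * z * w)

/-- Zwegers' Mordell integral `h(z; T) = ∫ exp (πi T x² - 2π z x) / cosh (π x) dx`, with the modular
variable `T` as first argument. -/
noncomputable def mordellIntegral (T z : ℂ) : ℂ := ∫ x : ℝ, mordellKernel T z x / cosh (π * x)

lemma differentiable_mordellKernel (T z : ℂ) : Differentiable ℂ (mordellKernel T z) := by
  unfold mordellKernel
  fun_prop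

lemma norm_mordellKernel_le (T z : ℂ) {w : ℂ} (hw : |w.im| ≤ 1) :
    ‖mordellKernel T z w‖ ≤ Real.exp (-(π * T.im) * w.re ^ 2 +
      2 * π * (‖T‖ + ‖z‖) * |w.re| + π * (‖T‖ + 2 * ‖z‖)) := by
  rw [mordellKernel, norm_exp, Real.exp_le_exp]
  have hsplit : π * I * T * w ^ 2 - 2 * π * z * w =
      (π * w.re ^ 2 : ℝ) * (I * T) + π * (I * T * ((w - w.re) * (w + w.re)) - 2 * z * w) := by
    push_cast
    ring
  have hsub : ‖w - w.re‖ ≤ 1 := by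
    rw [show w - w.re = w.im * I by linear_combination -(re_add_im w)]
    simpa using hw
  have hnorm : ‖w‖ ≤ |w.re| + 1 := (norm_le_abs_re_add_abs_im w).trans (by gcongr)
  have hadd : ‖w + w.re‖ ≤ 2 * |w.re| + 1 := (norm_add_le _ _).trans <| by
    rw [norm_real, Real.norm_eq_abs]
    linarith
  have hbound : (I * T * ((w - w.re) * (w + w.re)) - 2 * z * w).re ≤
      ‖T‖ * (1 * (2 * |w.re| + 1)) + 2 * ‖z‖ * (|w.re| + 1) := by
    refine (re_le_norm _).trans ((norm_sub_le _ _).trans ?_)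
    simp only [norm_mul, norm_I, one_mul, norm_ofNat]
    gcongr
    exact mul_le_mul hsub hadd (norm_nonneg _) zero_le_one |>.trans_eq (one_mul _)
  rw [hsplit, add_re, re_ofReal_mul, re_ofReal_mul, I_mul_re]
  nlinarith [mul_le_mul_of_nonneg_left hbound Real.pi_pos.le]

lemma exists_one_add_abs_re_mul_norm_mordellKernel_le {T : ℂ} (hT : 0 < T.im) (R : ℝ) :
    ∃ C, ∀ z w : ℂ, ‖z‖ ≤ R → |w.im| ≤ 1 → (1 + |w.re|) * ‖mordellKernel T z w‖ ≤ C := by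
  set a := π * T.im
  set b := 2 * π * (‖T‖ + R) + 1
  have : 0 < a := by positivity
  refine ⟨Real.exp (b ^ 2 / (4 * a) + π * (‖T‖ + 2 * R)), fun z w hz hw => ?_⟩
  have hsq : -a * w.re ^ 2 + b * |w.re| ≤ b ^ 2 / (4 * a) := by
    rw [le_div_iff₀ (by positivity), ← sq_abs w.re]
    nlinarith [sq_nonneg (2 * a * |w.re| - b)]
  calc (1 + |w.re|) * ‖mordellKernel T z w‖
      ≤ Real.exp |w.re| * Real.exp (-a * w.re ^ 2 + 2 * π * (‖T‖ + ‖z‖) * |w.re| +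
          π * (‖T‖ + 2 * ‖z‖)) := by
        gcongr
        · exact (add_comm _ _).trans_le (Real.add_one_le_exp _)
        · exact norm_mordellKernel_le T z hw
    _ ≤ Real.exp |w.re| * Real.exp (-a * w.re ^ 2 + 2 * π * (‖T‖ + R) * |w.re| +
          π * (‖T‖ + 2 * R)) := by gcongr
    _ ≤ _ := by
        rw [← Real.exp_add, Real.exp_le_exp]
        linarith

lemma exists_norm_mordellKernel_le {T : ℂ} (hT : 0 < T.im) (z : ℂ) :
    ∃ C, ∀ w : ℂ, |w.im| ≤ 1 → ‖mordellKernel T z w‖ ≤ C :=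
  let ⟨C, hC⟩ := exists_one_add_abs_re_mul_norm_mordellKernel_le hT ‖z‖
  ⟨C, fun w hw => (le_mul_of_one_le_left (norm_nonneg _) (by simp)).trans (hC z w le_rfl hw)⟩

lemma integrable_mordellKernel_div_cosh {T : ℂ} (hT : 0 < T.im) (z : ℂ) :
    Integrable fun x : ℝ => mordellKernel T z x / cosh (π * x) :=
  let ⟨_, hC⟩ := exists_norm_mordellKernel_le hT z
  integrable_div_cosh_pi_mul ((differentiable_mordellKernel T z).continuous.comp continuous_ofReal)
    fun x => hC x (by simp)

lemma hasDerivAt_mordellKernel_left (T z w : ℂ) :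
    HasDerivAt (fun z => mordellKernel T z w) (-(2 * π) * w * mordellKernel T z w) z := by
  have hlin : HasDerivAt (fun z : ℂ => π * I * T * w ^ 2 - 2 * π * z * w) (-(2 * π * 1 * w)) z :=
    (((hasDerivAt_id z).const_mul (2 * π : ℂ)).mul_const w).const_sub _
  refine hlin.cexp.congr_deriv ?_
  rw [mordellKernel]
  ring

lemma differentiable_mordellIntegral {T : ℂ} (hT : 0 < T.im) :
    Differentiable ℂ (mordellIntegral T) := by
  intro z₀
  obtain ⟨C, hC⟩ := exists_one_add_abs_re_mul_norm_mordellKernel_le hT (‖z₀‖ + 1)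
  refine (hasDerivAt_integral_of_dominated_loc_of_deriv_le (μ := volume) (𝕜 := ℂ)
    (F := fun z (x : ℝ) => mordellKernel T z x / cosh (π * x))
    (F' := fun z (x : ℝ) => -(2 * π) * x * mordellKernel T z x / cosh (π * x))
    (bound := fun x => 2 * π * C * (1 / Real.cosh (π * x)))
    (Metric.ball_mem_nhds z₀ one_pos)
    (.of_forall fun z => (integrable_mordellKernel_div_cosh hT z).aestronglyMeasurable)
    (integrable_mordellKernel_div_cosh hT z₀) ?_ (.of_forall fun x z hz => ?_)
    (integrable_one_div_cosh_pi_mul.const_mul _)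
    (.of_forall fun x z _ => (hasDerivAt_mordellKernel_left T z x).div_const _)).2.differentiableAt
  · have := (differentiable_mordellKernel T z₀).continuous
    exact (Continuous.div (by fun_prop) (by fun_prop) cosh_pi_mul_ne_zero).aestronglyMeasurable
  · have hz' : ‖z‖ ≤ ‖z₀‖ + 1 :=
      (norm_le_norm_add_norm_sub' z z₀).trans (by gcongr; exact (mem_ball_iff_norm.mp hz).le)
    have hbound : |x| * ‖mordellKernel T z x‖ ≤ C := by
      refine le_trans ?_ (hC z x hz' (by simp))
      rw [ofReal_re]
      gcongr
      exact le_add_of_nonneg_left zero_le_one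
    rw [norm_div, norm_mul, norm_mul, norm_neg, norm_mul, norm_ofNat, norm_real, norm_real,
      Real.norm_of_nonneg Real.pi_pos.le, Real.norm_eq_abs, ← ofReal_mul, ← ofReal_cosh, norm_real,
      Real.norm_of_nonneg (Real.cosh_pos _).le, mul_assoc, mul_one_div]
    gcongr

theorem mordellIntegral_add_mordellIntegral_add_one {T : ℂ} (hT : 0 < T.im) (z : ℂ) :
    mordellIntegral T z + mordellIntegral T (z + 1) =
      2 / (-I * T) ^ (1 / 2 : ℂ) * exp (π * I * (z + 1 / 2) ^ 2 / T) := by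
  have hT0 : T ≠ 0 := by rintro rfl; simp at hT
  have harg : (-I * T).arg ≠ π := (mem_slitPlane_iff_arg.mp (.inl (by simpa using hT))).1
  have hsum : ∀ x : ℝ, mordellKernel T z x / cosh (π * x) +
      mordellKernel T (z + 1) x / cosh (π * x) =
        2 * exp (π * I * T * x ^ 2 + -2 * π * (z + 1 / 2) * x + 0) := fun x => by
    have hmul : ∀ A B C : ℂ, 2 * A * ((B + C) / 2) = A * B + A * C := fun _ _ _ => by ring
    rw [← add_div, div_eq_iff (cosh_pi_mul_ne_zero x), cosh, hmul, mordellKernel, mordellKernel,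
      ← exp_add, ← exp_add]
    ring_nf
  have hinv : (π : ℂ) / -(π * I * T) = (-I * T)⁻¹ := by
    have : (π : ℂ) ≠ 0 := ofReal_ne_zero.mpr Real.pi_ne_zero
    field_simp
  have hexponent : 0 - (-2 * π * (z + 1 / 2)) ^ 2 / (4 * (π * I * T)) =
      π * I * (z + 1 / 2) ^ 2 / T := by
    field_simp
    linear_combination -(4 * π * (z * 2 + 1) ^ 2) * I_sq
  rw [mordellIntegral, mordellIntegral, ← integral_add (integrable_mordellKernel_div_cosh hT z)
    (integrable_mordellKernel_div_cosh hT _)]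
  simp_rw [hsum]
  rw [integral_const_mul, integral_cexp_quadratic (by simpa using mul_pos Real.pi_pos hT), hinv,
    hexponent, inv_cpow _ _ harg]
  ring

theorem mordellIntegral_add_period {T : ℂ} (hT : 0 < T.im) (z : ℂ) :
    mordellIntegral T (z + T) = -exp (2 * π * I * z + π * I * T) * mordellIntegral T z +
      2 * exp (π * I * z + 3 * π * I * T / 4) := by
  obtain ⟨C, hC⟩ := exists_norm_mordellKernel_le hT z
  have hkernel : ∀ x : ℝ, mordellKernel T z (x + I) =
      exp (-(2 * π * I * z + π * I * T)) * mordellKernel T (z + T) x := fun x => by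
    rw [mordellKernel, mordellKernel, ← exp_add]
    congr 1
    linear_combination (π * I * T + 2 * π * T * x) * I_sq
  have hhalf : mordellKernel T z (I / 2) =
      exp (-(2 * π * I * z + π * I * T)) * exp (π * I * z + 3 * π * I * T / 4) := by
    rw [mordellKernel, ← exp_add]
    congr 1
    linear_combination π * I * T / 4 * I_sq
  have hres := integral_div_cosh_add_integral_add_I_div_cosh (differentiable_mordellKernel T z)
    fun w h0 h1 => hC w (by rwa [abs_of_nonneg h0])
  simp_rw [hkernel, hhalf, mul_div_assoc (exp _)] at hres
  rw [integral_const_mul, ← mordellIntegral, ← mordellIntegral] at hres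
  have hinv : exp (2 * π * I * z + π * I * T) * exp (-(2 * π * I * z + π * I * T)) = 1 := by
    rw [← exp_add, add_neg_cancel, exp_zero]
  linear_combination exp (2 * π * I * z + π * I * T) * hres -
    (mordellIntegral T (z + T) - 2 * exp (π * I * z + 3 * π * I * T / 4)) * hinv

lemma mordellKernel_add_mul_I (T z w a : ℂ) : mordellKernel T z (w + a * I) =
    exp (-(π * I * T * a ^ 2 + 2 * π * I * a * z)) * mordellKernel T (z + a * T) w := by
  rw [mordellKernel, mordellKernel, ← exp_add]
  congr 1
  linear_combination (π * I * T * a ^ 2 + 2 * π * T * a * w) * I_sq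

theorem mordellIntegral_eq_integral_add_mul_I {T : ℂ} (hT : 0 < T.im) (z : ℂ) {a : ℝ}
    (ha : 0 ≤ a) (ha' : a < 1 / 2) :
    mordellIntegral T z = exp (-(π * I * T * a ^ 2 + 2 * π * I * a * z)) *
      ∫ x : ℝ, mordellKernel T (z + a * T) x / cosh (π * (x + a * I)) := by
  obtain ⟨C, hC⟩ := exists_norm_mordellKernel_le hT z
  have hK := differentiable_mordellKernel T z
  have hcos : Real.cos (π * a) ≠ 0 := (Real.cos_pos_of_mem_Ioo
    ⟨by nlinarith [Real.pi_pos], by nlinarith [Real.pi_pos]⟩).ne'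
  have hC' : ∀ w : ℂ, 0 ≤ w.im → w.im ≤ a → ‖mordellKernel T z w‖ ≤ C := fun w h0 h1 =>
    hC w (by rw [abs_of_nonneg h0]; linarith)
  rw [mordellIntegral, ← integral_const_mul]
  refine (integral_eq_integral_add_mul_I (f := fun w => mordellKernel T z w / cosh (π * w))
    (B := fun r => C / r) ha (fun w h0 h1 => ?_) (fun w h0 h1 hw => ?_)
    (tendsto_const_nhds.div_atTop tendsto_id) (integrable_mordellKernel_div_cosh hT z)
    (integrable_div_cosh_pi_mul_add_mul_I
      (φ := fun x => mordellKernel T z (x + a * I)) (by have := hK.continuous; fun_prop)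
      (fun x => hC' _ (by simpa) (by simp)) hcos)).trans ?_
  · refine (hK w).div (by fun_prop) fun h => ?_
    rw [eq_I_div_two_of_cosh_pi_mul_eq_zero h0 (by linarith) h] at h1
    norm_num at h1
    linarith
  · rw [norm_div]
    exact div_le_div₀ ((norm_nonneg _).trans (hC' w h0 h1)) (hC' w h0 h1) (by positivity)
      (abs_re_le_norm_cosh_pi_mul w)
  · simp_rw [mordellKernel_add_mul_I, mul_div_assoc]

end MordellIntegral

section Lattice

open Filter Topology

/-- The lattice `ℤ + ℤT` in `ℂ`. -/
def tauLattice (T : ℂ) : AddSubgroup ℂ := AddSubgroup.closure {1, T}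

lemma mem_tauLattice {T u : ℂ} : u ∈ tauLattice T ↔ ∃ m n : ℤ, (m : ℂ) + n * T = u := by
  simp [tauLattice, AddSubgroup.mem_closure_pair]

lemma one_mem_tauLattice (T : ℂ) : 1 ∈ tauLattice T :=
  AddSubgroup.subset_closure (by simp)

lemma self_mem_tauLattice (T : ℂ) : T ∈ tauLattice T :=
  AddSubgroup.subset_closure (by simp)

lemma tauLattice_add_one (T : ℂ) : tauLattice (T + 1) = tauLattice T := by
  ext u
  simp only [mem_tauLattice]
  constructor
  · rintro ⟨m, n, rfl⟩
    exact ⟨m + n, n, by push_cast; ring⟩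
  · rintro ⟨m, n, rfl⟩
    exact ⟨m - n, n, by push_cast; ring⟩

lemma linearIndependent_one_of_im_pos {T : ℂ} (hT : 0 < T.im) : LinearIndependent ℝ ![1, T] := by
  refine LinearIndependent.pair_iff.mpr fun s t h => ?_
  have ht : t = 0 := by simpa [hT.ne'] using congrArg im h
  subst ht
  exact ⟨by simpa using h, rfl⟩

lemma eventually_notMem_tauLattice {T : ℂ} (hT : 0 < T.im) (c : ℂ) :
    ∀ᶠ u in 𝓝[≠] c, u ∉ tauLattice T := by
  let L : PeriodPair := ⟨1, T, linearIndependent_one_of_im_pos hT⟩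
  filter_upwards [nhdsWithin_le_nhds (L.compl_lattice_sdiff_singleton_mem_nhds c),
    self_mem_nhdsWithin] with u hu huc hmem
  obtain ⟨m, n, h⟩ := mem_tauLattice.mp hmem
  exact hu ⟨L.mem_lattice.mpr ⟨m, n, by simpa [L] using h⟩, huc⟩

lemma exists_forall_le_of_periodic {T : ℂ} (hT : 0 < T.im) {φ : ℂ → ℝ} (hφ : Continuous φ)
    (h1 : Function.Periodic φ 1) (hφT : Function.Periodic φ T) : ∃ M, ∀ u, φ u ≤ M := by
  have hcont : Continuous fun p : ℝ × ℝ => φ (p.1 + p.2 * T) := by fun_prop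
  obtain ⟨M, hM⟩ := ((isCompact_Icc (a := (0 : ℝ)) (b := 1)).prod
    (isCompact_Icc (a := (0 : ℝ)) (b := 1))).bddAbove_image hcont.continuousOn
  refine ⟨M, fun u => ?_⟩
  set b := u.im / T.im with hb
  set a := u.re - b * T.re with ha
  have hu : u = a + b * T := by
    apply Complex.ext
    · simp [ha]
    · simp [hb, hT.ne']
  have hfract : φ u = φ ((Int.fract a : ℝ) + (Int.fract b : ℝ) * T) := by
    rw [← h1.sub_zsmul_eq ⌊a⌋, ← hφT.sub_zsmul_eq ⌊b⌋, hu, Int.fract, Int.fract]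
    congr 1
    simp only [zsmul_eq_mul]
    push_cast
    ring
  rw [hfract]
  exact hM ⟨(Int.fract a, Int.fract b), ⟨⟨Int.fract_nonneg a, (Int.fract_lt_one a).le⟩,
    Int.fract_nonneg b, (Int.fract_lt_one b).le⟩, rfl⟩

end Lattice

section RemovableSingularities

open Filter Topology Asymptotics

lemma exists_analyticAt_eventuallyEq_of_tendsto_sub_mul {G : ℂ → ℂ} {c : ℂ}
    (hG : ∀ᶠ u in 𝓝[≠] c, DifferentiableAt ℂ G u)
    (hc : Tendsto (fun u => (u - c) * G u) (𝓝[≠] c) (𝓝 0)) :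
    ∃ F, AnalyticAt ℂ F c ∧ G =ᶠ[𝓝[≠] c] F := by
  refine ⟨Function.update G c (limUnder (𝓝[≠] c) G), ?_,
    eventuallyEq_nhdsWithin_of_eqOn fun u hu => (Function.update_of_ne hu _ _).symm⟩
  rw [eventually_nhdsWithin_iff] at hG
  have hG' : (fun u => G u - G c) =o[𝓝[≠] c] fun u => (u - c)⁻¹ := by
    refine (isLittleO_iff_tendsto' ?_).mpr ?_
    · filter_upwards [self_mem_nhdsWithin] with u hu h
      exact absurd (sub_eq_zero.mp (inv_eq_zero.mp h)) hu
    · have hlin : Tendsto (fun u => (u - c) * G c) (𝓝[≠] c) (𝓝 0) :=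
        (Continuous.tendsto' (by fun_prop) _ _ (by simp)).mono_left nhdsWithin_le_nhds
      simpa [div_inv_eq_mul, mul_comm, mul_sub] using hc.sub hlin
  exact (differentiableOn_update_limUnder_of_isLittleO hG
    (fun u hu => (hu.1 hu.2).differentiableWithinAt) hG').analyticAt hG

lemma exists_differentiable_eqOn_compl {S : Set ℂ} {G : ℂ → ℂ}
    (hS : ∀ c, ∀ᶠ u in 𝓝[≠] c, u ∉ S) (hG : ∀ u ∉ S, DifferentiableAt ℂ G u)
    (hlim : ∀ c ∈ S, Tendsto (fun u => (u - c) * G u) (𝓝[≠] c) (𝓝 0)) :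
    ∃ F, Differentiable ℂ F ∧ ∀ u ∉ S, F u = G u := by
  classical
  let F := S.piecewise (fun c => limUnder (𝓝[≠] c) G) G
  have hFG : ∀ u ∉ S, F u = G u := fun u hu => Set.piecewise_eq_of_notMem _ _ _ hu
  refine ⟨F, fun c => ?_, hFG⟩
  have hFGc : G =ᶠ[𝓝[≠] c] F := (hS c).mono fun u hu => (hFG u hu).symm
  by_cases hc : c ∈ S
  · obtain ⟨H, hH, hGH⟩ := exists_analyticAt_eventuallyEq_of_tendsto_sub_mul
      ((hS c).mono hG) (hlim c hc)
    have hFc : F c = H c := by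
      refine (Set.piecewise_eq_of_mem _ _ _ hc).trans ?_
      exact ((hH.continuousAt.tendsto.mono_left nhdsWithin_le_nhds).congr' hGH.symm).limUnder_eq
    exact hH.differentiableAt.congr_of_eventuallyEq
      (eventuallyEq_nhds_of_eventuallyEq_nhdsNE (hFGc.symm.trans hGH) hFc)
  · exact (hG c hc).congr_of_eventuallyEq
      (eventuallyEq_nhds_of_eventuallyEq_nhdsNE hFGc.symm (hFG c hc))

end RemovableSingularities

section QuasiPeriodic

open Filter Topology Set

open scoped Real

/-- The weight `e^{π(Im u)²/Im T - π Im u}`, chosen so that `‖F‖` times the weight is periodic under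
`ℤ + ℤT` whenever `F(u + 1) = -F(u)` and `F(u + T) = e^{2πiu}F(u)`. -/
noncomputable def quasiPeriodWeight (T u : ℂ) : ℝ :=
  Real.exp (π * u.im ^ 2 / T.im - π * u.im)

lemma continuous_quasiPeriodWeight (T : ℂ) : Continuous (quasiPeriodWeight T) := by
  unfold quasiPeriodWeight
  fun_prop

lemma quasiPeriodWeight_pos (T u : ℂ) : 0 < quasiPeriodWeight T u := Real.exp_pos _

lemma quasiPeriodWeight_add_one (T u : ℂ) :
    quasiPeriodWeight T (u + 1) = quasiPeriodWeight T u := by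
  simp [quasiPeriodWeight]

lemma norm_exp_mul_quasiPeriodWeight_add_self {T : ℂ} (hT : 0 < T.im) (u : ℂ) :
    ‖exp (2 * π * I * u)‖ * quasiPeriodWeight T (u + T) = quasiPeriodWeight T u := by
  have hT0 := hT.ne'
  rw [quasiPeriodWeight, quasiPeriodWeight, norm_exp, ← Real.exp_add]
  congr 1
  simp
  field_simp
  ring

lemma exp_neg_le_quasiPeriodWeight {T : ℂ} (hT : 0 < T.im) (u : ℂ) :
    Real.exp (-(π * T.im / 4)) ≤ quasiPeriodWeight T u := by
  rw [quasiPeriodWeight, Real.exp_le_exp]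
  have hsq : π * u.im ^ 2 / T.im - π * u.im + π * T.im / 4 =
      π * (u.im - T.im / 2) ^ 2 / T.im := by
    have := hT.ne'
    field_simp
    ring
  have : 0 ≤ π * (u.im - T.im / 2) ^ 2 / T.im := by positivity
  linarith

variable {T : ℂ} {G : ℂ → ℂ}

lemma eq_zero_of_quasiPeriodic (hT : 0 < T.im) (hG : Differentiable ℂ G)
    (h1 : ∀ u, G (u + 1) = -G u) (hGT : ∀ u, G (u + T) = exp (2 * π * I * u) * G u) : G = 0 := by
  obtain ⟨M, hM⟩ := exists_forall_le_of_periodic hT (φ := fun u => ‖G u‖ * quasiPeriodWeight T u)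
    (hG.continuous.norm.mul (continuous_quasiPeriodWeight T))
    (fun u => by simp only [h1, norm_neg, quasiPeriodWeight_add_one])
    (fun u => by
      simp only [hGT, norm_mul]
      rw [mul_right_comm, norm_exp_mul_quasiPeriodWeight_add_self hT, mul_comm])
  have hbdd : Bornology.IsBounded (range G) := by
    refine isBounded_iff_forall_norm_le.mpr ⟨M / Real.exp (-(π * T.im / 4)), ?_⟩
    rintro _ ⟨u, rfl⟩
    rw [le_div_iff₀ (Real.exp_pos _)]
    exact (mul_le_mul_of_nonneg_left (exp_neg_le_quasiPeriodWeight hT u)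
      (norm_nonneg _)).trans (hM u)
  funext u
  have hconst := hG.apply_eq_apply_of_bounded hbdd (u + 1) u
  rw [h1] at hconst
  exact self_eq_neg.mp hconst.symm

lemma periodic_indicator_norm_mul_quasiPeriodWeight (hT : 0 < T.im)
    (h1 : ∀ u ∉ tauLattice T, G (u + 1) = -G u)
    (hGT : ∀ u ∉ tauLattice T, G (u + T) = exp (2 * π * I * u) * G u)
    {l : ℂ} (hl : l ∈ tauLattice T) :
    Function.Periodic
      ((tauLattice T : Set ℂ)ᶜ.indicator fun u => ‖G u‖ * quasiPeriodWeight T u) l := by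
  have hind : ∀ l ∈ tauLattice T, (∀ u ∉ tauLattice T, ‖G (u + l)‖ * quasiPeriodWeight T (u + l) =
      ‖G u‖ * quasiPeriodWeight T u) → Function.Periodic
      ((tauLattice T : Set ℂ)ᶜ.indicator fun u => ‖G u‖ * quasiPeriodWeight T u) l := by
    intro l hl h u
    by_cases hu : u ∈ tauLattice T
    · simp [indicator, hu, add_mem hu hl]
    · simpa [indicator, hu, (add_mem_cancel_right hl).not.mpr hu] using h u hu
  have hone := hind 1 (one_mem_tauLattice T) fun u hu => by
    rw [h1 u hu, norm_neg, quasiPeriodWeight_add_one]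
  have htau := hind T (self_mem_tauLattice T) fun u hu => by
    rw [hGT u hu, norm_mul, mul_right_comm, norm_exp_mul_quasiPeriodWeight_add_self hT, mul_comm]
  obtain ⟨m, n, rfl⟩ := mem_tauLattice.mp hl
  simpa using (hone.zsmul m).add_period (htau.zsmul n)

lemma tendsto_sub_mul_of_quasiPeriodic (hT : 0 < T.im)
    (h0 : Tendsto (fun u => u * G u) (𝓝[≠] 0) (𝓝 0))
    (h1 : ∀ u ∉ tauLattice T, G (u + 1) = -G u)
    (hGT : ∀ u ∉ tauLattice T, G (u + T) = exp (2 * π * I * u) * G u)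
    {l : ℂ} (hl : l ∈ tauLattice T) :
    Tendsto (fun u => (u - l) * G u) (𝓝[≠] l) (𝓝 0) := by
  set w := quasiPeriodWeight T
  have hw : Continuous w := continuous_quasiPeriodWeight T
  have hshift : Tendsto (fun u => u - l) (𝓝[≠] l) (𝓝[≠] 0) :=
    tendsto_nhdsWithin_of_tendsto_nhds_of_eventually_within _
      ((Continuous.tendsto' (f := fun u => u - l) (by fun_prop) _ _ (sub_self l)).mono_left
        nhdsWithin_le_nhds)
      (eventually_nhdsWithin_of_forall fun u hu => sub_ne_zero.mpr hu)
  have hlim : Tendsto (fun u => ‖(u - l) * G (u - l)‖ * (w (u - l) / w u)) (𝓝[≠] l) (𝓝 0) := by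
    have hratio : Continuous fun u => w (u - l) / w u :=
      (by fun_prop : Continuous fun u => w (u - l)).div hw
        fun u => (quasiPeriodWeight_pos T u).ne'
    simpa using (h0.comp hshift).norm.mul ((hratio.tendsto l).mono_left nhdsWithin_le_nhds)
  refine tendsto_zero_iff_norm_tendsto_zero.mpr (hlim.congr' ?_)
  filter_upwards [eventually_notMem_tauLattice hT l] with u hu
  have hul : u - l ∉ tauLattice T := fun h => hu (by simpa using add_mem h hl)
  have hper : ‖G (u - l)‖ * w (u - l) = ‖G u‖ * w u := by
    simpa [indicator, hu, hul] using
      (periodic_indicator_norm_mul_quasiPeriodWeight hT h1 hGT hl).sub_eq u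
  have hwu : w u ≠ 0 := (quasiPeriodWeight_pos T u).ne'
  rw [norm_mul, norm_mul]
  field_simp
  linear_combination ‖u - l‖ * hper

theorem eq_zero_of_quasiPeriodic_of_tendsto (hT : 0 < T.im)
    (hG : ∀ u ∉ tauLattice T, DifferentiableAt ℂ G u)
    (h0 : Tendsto (fun u => u * G u) (𝓝[≠] 0) (𝓝 0))
    (h1 : ∀ u ∉ tauLattice T, G (u + 1) = -G u)
    (hGT : ∀ u ∉ tauLattice T, G (u + T) = exp (2 * π * I * u) * G u) :
    ∀ u ∉ tauLattice T, G u = 0 := by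
  obtain ⟨F, hF, hFG⟩ := exists_differentiable_eqOn_compl (eventually_notMem_tauLattice hT) hG
    fun l hl => tendsto_sub_mul_of_quasiPeriodic hT h0 h1 hGT hl
  have hext : ∀ f g : ℂ → ℂ, Continuous f → Continuous g → (∀ u ∉ tauLattice T, f u = g u) →
      ∀ u, f u = g u := fun f g hf hg hfg u =>
    tendsto_nhds_unique_of_eventuallyEq ((hf.tendsto u).mono_left nhdsWithin_le_nhds)
      ((hg.tendsto u).mono_left nhdsWithin_le_nhds)
      ((eventually_notMem_tauLattice hT u).mono hfg)
  have hFc := hF.continuous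
  have hF0 := eq_zero_of_quasiPeriodic hT hF
    (hext _ _ (by fun_prop) (by fun_prop) fun u hu => by
      rw [hFG _ ((add_mem_cancel_right (one_mem_tauLattice T)).not.mpr hu), h1 u hu, hFG u hu])
    (hext _ _ (by fun_prop) (by fun_prop) fun u hu => by
      rw [hFG _ ((add_mem_cancel_right (self_mem_tauLattice T)).not.mpr hu), hGT u hu, hFG u hu])
  exact fun u hu => by rw [← hFG u hu, hF0, Pi.zero_apply]

end QuasiPeriodic

section AppellSum

open Filter Topology Metric

open scoped Real

lemma abs_im_le_norm_sin (w : ℂ) : |w.im| ≤ ‖sin w‖ := by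
  have hsin : sin w = cosh (w.im + (π / 2 - w.re : ℝ) * I) := by
    rw [← cos_pi_div_two_sub, ← cosh_mul_I]
    congr 1
    push_cast
    linear_combination I * re_add_im w - (w.im : ℂ) * I_sq
  rw [hsin]
  calc |w.im| ≤ |Real.sinh w.im| := by
        rw [Real.abs_sinh]
        exact Real.self_le_sinh_iff.mpr (abs_nonneg _)
    _ ≤ _ := abs_sinh_le_norm_cosh _ _

lemma exp_neg_two_mul_mul_I (w : ℂ) : exp (-(2 * w * I)) = 1 - 2 * I * exp (-(w * I)) * sin w := by
  have hsq : exp (-(2 * w * I)) = exp (-(w * I)) ^ 2 := by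
    rw [← exp_nat_mul]
    congr 1
    push_cast
    ring
  have hinv : exp (-(w * I)) * exp (w * I) = 1 := by rw [← exp_add]; simp
  rw [hsq, sin, neg_mul]
  linear_combination -I ^ 2 * hinv + (exp (-(w * I)) ^ 2 - 1) * I_sq

/-- The numerator `(-1)ⁿ e^{πiτn(n+1)}` of the Appell sum. -/
noncomputable def appellCoeff (τ : ℂ) (n : ℤ) : ℂ := (-1) ^ n * exp (π * I * τ * (n ^ 2 + n))

/-- The `n`-th term of the Appell sum; it has a pole at `u = -nτ` modulo `ℤ`, where it takes the
junk value `0`. -/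
noncomputable def appellTerm (τ u : ℂ) (n : ℤ) : ℂ := appellCoeff τ n / sin (π * (u + n * τ))

/-- The level one Appell sum `∑ₙ (-1)ⁿ e^{πiτn(n+1)} / sin(π(u + nτ))`. Up to elementary factors it
is the numerator of Zwegers' `μ(u, τ/2; τ)`. -/
noncomputable def appellSum (τ u : ℂ) : ℂ := ∑' n : ℤ, appellTerm τ u n

variable {τ u c : ℂ}

lemma summable_norm_appellCoeff (hτ : 0 < τ.im) : Summable fun n => ‖appellCoeff τ n‖ := by
  refine ((summable_jacobiTheta₂_term_iff (τ / 2) τ).mpr hτ).norm.congr fun n => ?_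
  rw [appellCoeff, norm_mul, norm_zpow, norm_neg, norm_one, one_zpow, one_mul, jacobiTheta₂_term]
  congr 2
  ring

lemma eventually_one_le_norm_sin (hτ : 0 < τ.im) (c : ℂ) :
    ∀ᶠ n : ℤ in cofinite, ∀ u ∈ ball c 1, 1 ≤ ‖sin (π * (u + n * τ))‖ := by
  filter_upwards [(tendsto_norm_cocompact_atTop.comp Int.tendsto_coe_cofinite).eventually_ge_atTop
    ((2 + |c.im|) / τ.im)] with n hn u hu
  rw [Function.comp_apply, Real.norm_eq_abs, div_le_iff₀ hτ] at hn
  have hu' : |u.im - c.im| < 1 :=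
    (abs_im_le_norm (u - c)).trans_lt (by simpa [dist_eq_norm] using hu)
  have him : 1 ≤ |u.im + n * τ.im| := by
    have h1 := abs_sub_abs_le_abs_sub u.im c.im
    have h2 := abs_sub_abs_le_abs_sub (n * τ.im) (-u.im)
    rw [abs_mul, abs_of_pos hτ, abs_neg, sub_neg_eq_add, add_comm] at h2
    linarith
  calc (1 : ℝ) ≤ π * |u.im + n * τ.im| := by nlinarith [Real.pi_gt_three]
    _ = |(π * (u + n * τ)).im| := by simp [abs_mul, abs_of_pos Real.pi_pos]
    _ ≤ _ := abs_im_le_norm_sin _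

lemma norm_appellTerm_le {n : ℤ} (h : 1 ≤ ‖sin (π * (u + n * τ))‖) :
    ‖appellTerm τ u n‖ ≤ ‖appellCoeff τ n‖ := by
  rw [appellTerm, norm_div]
  exact div_le_self (norm_nonneg _) h

lemma hasSum_appellSum (hτ : 0 < τ.im) (u : ℂ) : HasSum (appellTerm τ u) (appellSum τ u) := by
  refine (Summable.of_norm_bounded_eventually (summable_norm_appellCoeff hτ) ?_).hasSum
  filter_upwards [eventually_one_le_norm_sin hτ u] with n hn
  exact norm_appellTerm_le (hn u (mem_ball_self one_pos))

lemma differentiableAt_appellTerm {n : ℤ} (h : sin (π * (c + n * τ)) ≠ 0) :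
    DifferentiableAt ℂ (fun u => appellTerm τ u n) c :=
  DifferentiableAt.div (by fun_prop) (by fun_prop) h

lemma differentiableAt_appellSum_sub_sum (hτ : 0 < τ.im) (s : Finset ℤ)
    (hs : ∀ n ∉ s, sin (π * (c + n * τ)) ≠ 0) :
    DifferentiableAt ℂ (fun u => appellSum τ u - ∑ n ∈ s, appellTerm τ u n) c := by
  classical
  set t := s ∪ (Filter.eventually_cofinite.mp (eventually_one_le_norm_sin hτ c)).toFinset
  have hst : s ⊆ t := Finset.subset_union_left
  have ht : ∀ n ∉ t, ∀ u ∈ ball c 1, 1 ≤ ‖sin (π * (u + n * τ))‖ := fun n hn => by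
    by_contra h
    exact hn (Finset.mem_union_right _ (by simpa using h))
  have htail : DifferentiableOn ℂ (fun u => ∑' n : {n // n ∉ t}, appellTerm τ u n) (ball c 1) :=
    differentiableOn_tsum_of_summable_norm ((summable_norm_appellCoeff hτ).subtype _)
      (fun n u hu => (differentiableAt_appellTerm (norm_pos_iff.mp
        (one_pos.trans_le (ht n n.2 u hu)))).differentiableWithinAt)
      isOpen_ball fun n u hu => norm_appellTerm_le (ht n n.2 u hu)
  have hhead : DifferentiableAt ℂ (fun u => ∑ n ∈ t \ s, appellTerm τ u n) c :=
    DifferentiableAt.fun_sum fun n hn =>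
      differentiableAt_appellTerm (hs n (Finset.mem_sdiff.mp hn).2)
  refine ((htail.differentiableAt (ball_mem_nhds c one_pos)).add hhead).congr_of_eventuallyEq
    (.of_forall fun u => ?_)
  have htotal := (hasSum_appellSum hτ u).summable.sum_add_tsum_subtype_compl t
  have hsplit := Finset.sum_sdiff (f := appellTerm τ u) hst
  rw [(hasSum_appellSum hτ u).tsum_eq] at htotal
  simp only [Pi.add_apply]
  linear_combination -htotal - hsplit

lemma sin_pi_mul_add_ne_zero (hu : u ∉ tauLattice τ) (n : ℤ) : sin (π * (u + n * τ)) ≠ 0 := by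
  intro h
  obtain ⟨k, hk⟩ := sin_eq_zero_iff.mp h
  refine hu (mem_tauLattice.mpr ⟨k, -n, mul_left_cancel₀ (ofReal_ne_zero.mpr Real.pi_ne_zero) ?_⟩)
  push_cast
  linear_combination -hk

lemma differentiableAt_appellSum (hτ : 0 < τ.im) (hu : u ∉ tauLattice τ) :
    DifferentiableAt ℂ (appellSum τ) u := by
  simpa using differentiableAt_appellSum_sub_sum hτ ∅ fun n _ => sin_pi_mul_add_ne_zero hu n

lemma tendsto_mul_appellTerm_zero (τ : ℂ) :
    Tendsto (fun u => u * appellTerm τ u 0) (𝓝[≠] 0) (𝓝 (1 / π)) := by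
  have hderiv : HasDerivAt (fun u : ℂ => sin (π * u)) π 0 := by
    simpa using ((hasDerivAt_id (0 : ℂ)).const_mul (π : ℂ)).csin
  rw [one_div]
  refine ((hasDerivAt_iff_tendsto_slope.mp hderiv).inv₀
    (ofReal_ne_zero.mpr Real.pi_ne_zero)).congr fun u => ?_
  simp [slope_def_field, appellTerm, appellCoeff, div_eq_mul_inv]

lemma tendsto_mul_appellSum (hτ : 0 < τ.im) :
    Tendsto (fun u => u * appellSum τ u) (𝓝[≠] 0) (𝓝 (1 / π)) := by
  have hsin : ∀ n ∉ ({0} : Finset ℤ), sin (π * (0 + n * τ)) ≠ 0 := fun n hn h => by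
    have him := abs_im_le_norm_sin (π * (0 + n * τ))
    rw [h, norm_zero, abs_nonpos_iff] at him
    exact hn (by simpa [Real.pi_ne_zero, hτ.ne'] using him)
  have hregular := (continuousAt_id.mul
    (differentiableAt_appellSum_sub_sum hτ {0} hsin).continuousAt).tendsto.mono_left
      (nhdsWithin_le_nhds (s := {0}ᶜ))
  simpa [mul_sub] using hregular.add (tendsto_mul_appellTerm_zero τ)

lemma appellSum_add_one (τ u : ℂ) : appellSum τ (u + 1) = -appellSum τ u := by
  rw [appellSum, appellSum, ← tsum_neg]
  congr 1 with n
  have harg : (π : ℂ) * (u + 1 + n * τ) = π * (u + n * τ) + π := by ring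
  rw [appellTerm, appellTerm, harg, sin_add_pi, div_neg]

lemma hasSum_jacobiTheta_add_one (hτ : 0 < τ.im) :
    HasSum (fun n : ℤ => (-1) ^ n * exp (π * I * τ * n ^ 2)) (jacobiTheta (τ + 1)) := by
  rw [jacobiTheta_eq_jacobiTheta₂]
  refine (hasSum_jacobiTheta₂_term 0 (τ := τ + 1) (by simpa using hτ)).congr_fun fun n => ?_
  have hparity : ((-1) ^ (n ^ 2) : ℂ) = (-1) ^ n := by
    rcases n.even_or_odd with hn | hn
    · rw [hn.neg_one_zpow, (hn.pow_of_ne_zero two_ne_zero).neg_one_zpow]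
    · rw [hn.neg_one_zpow, hn.pow.neg_one_zpow]
  rw [jacobiTheta₂_term, ← hparity, ← exp_pi_mul_I_mul_intCast, ← exp_add]
  congr 1
  push_cast
  ring

lemma jacobiTheta_add_one_ne_zero (hτ : 0 < τ.im) : jacobiTheta (τ + 1) ≠ 0 := by
  have hnorm : ‖exp (π * I * τ)‖ < 1 := by
    simpa using norm_exp_pi_mul_I_mul_lt_one one_pos hτ
  rw [← (hasSum_jacobiTheta_add_one hτ).tsum_eq]
  convert! tsum_neg_one_zpow_mul_sq_ne_zero (exp_ne_zero _) hnorm using 4 with n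
  rw [← exp_int_mul]
  congr 1
  push_cast
  ring

lemma appellTerm_add_self_sub_one (hu : u ∉ tauLattice τ) (n : ℤ) :
    appellTerm τ (u + τ) (n - 1) = -exp (2 * π * I * u) * appellTerm τ u n +
      2 * I * exp (π * I * u) * ((-1) ^ n * exp (π * I * τ * n ^ 2)) := by
  set w := π * (u + n * τ) with hw
  have hw0 : sin w ≠ 0 := sin_pi_mul_add_ne_zero hu n
  have harg : π * (u + τ + (n - 1 : ℤ) * τ) = w := by push_cast; ring
  have hcoeff : appellCoeff τ (n - 1) =
      -exp (2 * π * I * u) * appellCoeff τ n * exp (-(2 * w * I)) := by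
    have hexp : exp (π * I * τ * ((n - 1 : ℤ) ^ 2 + (n - 1 : ℤ))) =
        exp (2 * π * I * u) * exp (π * I * τ * (n ^ 2 + n)) * exp (-(2 * w * I)) := by
      rw [← exp_add, ← exp_add]
      congr 1
      push_cast
      ring
    rw [appellCoeff, appellCoeff, hexp, zpow_sub_one₀ (by norm_num)]
    ring
  have htheta : exp (2 * π * I * u) * appellCoeff τ n * exp (-(w * I)) =
      exp (π * I * u) * ((-1) ^ n * exp (π * I * τ * n ^ 2)) := by
    rw [appellCoeff, mul_left_comm, mul_assoc ((-1) ^ n), ← exp_add, ← exp_add, mul_left_comm,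
      ← exp_add]
    congr 2
    ring
  rw [appellTerm, appellTerm, harg, hcoeff, exp_neg_two_mul_mul_I, ← hw, div_eq_iff hw0, add_mul,
    mul_assoc _ (_ / _), div_mul_cancel₀ _ hw0]
  linear_combination 2 * I * sin w * htheta

lemma appellSum_add_self (hτ : 0 < τ.im) (hu : u ∉ tauLattice τ) :
    appellSum τ (u + τ) = -exp (2 * π * I * u) * appellSum τ u +
      2 * I * exp (π * I * u) * jacobiTheta (τ + 1) := by
  refine (((Equiv.subRight (1 : ℤ)).hasSum_iff.mpr (hasSum_appellSum hτ (u + τ))).congr_fun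
    fun n => ?_).unique (((hasSum_appellSum hτ u).mul_left _).add
      ((hasSum_jacobiTheta_add_one hτ).mul_left _))
  exact (appellTerm_add_self_sub_one hu n).symm

end AppellSum

section ModularTransform

open Filter Topology

open scoped Real

variable {τ u : ℂ}

lemma im_add_one_pos (hτ : 0 < τ.im) : 0 < (τ + 1).im := by simpa using hτ

lemma add_one_ne_zero_of_im_pos (hτ : 0 < τ.im) : τ + 1 ≠ 0 := fun h =>
  (im_add_one_pos hτ).ne' (by rw [h, zero_im])

lemma div_add_one_eq_one_add (hτ : 0 < τ.im) : τ / (τ + 1) = 1 + (-(τ + 1))⁻¹ := by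
  have hT := add_one_ne_zero_of_im_pos hτ
  rw [inv_neg]
  field_simp
  ring

lemma im_div_add_one_pos (hτ : 0 < τ.im) : 0 < (τ / (τ + 1)).im := by
  rw [div_add_one_eq_one_add hτ]
  simpa using UpperHalfPlane.im_inv_neg_coe_pos ⟨τ + 1, im_add_one_pos hτ⟩

lemma jacobiTheta_div_add_one_add_one (hτ : 0 < τ.im) :
    jacobiTheta (τ / (τ + 1) + 1) = (-I * (τ + 1)) ^ (1 / 2 : ℂ) * jacobiTheta (τ + 1) := by
  have hS := jacobiTheta_S_smul ⟨τ + 1, im_add_one_pos hτ⟩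
  rw [UpperHalfPlane.modular_S_smul] at hS
  rw [← hS]
  refine Eq.trans (congrArg jacobiTheta ?_) (jacobiTheta_two_add _)
  rw [div_add_one_eq_one_add hτ]
  ring

lemma div_add_one_notMem_tauLattice (hτ : 0 < τ.im) (hu : u ∉ tauLattice (τ + 1)) :
    u / (τ + 1) ∉ tauLattice (τ / (τ + 1)) := by
  have hT := add_one_ne_zero_of_im_pos hτ
  intro h
  obtain ⟨m, n, h⟩ := mem_tauLattice.mp h
  refine hu (mem_tauLattice.mpr ⟨-n, m + n, ?_⟩)
  field_simp at h
  push_cast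
  linear_combination h

/-- The image of the Appell sum under the modular substitution
`(τ, u) ↦ (τ / (τ + 1), u / (τ + 1))`, with the automorphy factor that makes it quasi-periodic
under the same lattice as `appellSum τ`. -/
noncomputable def appellSumTransform (τ u : ℂ) : ℂ :=
  1 / (τ + 1) * exp (π * I * (u ^ 2 - τ * u) / (τ + 1)) * appellSum (τ / (τ + 1)) (u / (τ + 1))

lemma differentiableAt_appellSumTransform (hτ : 0 < τ.im) (hu : u ∉ tauLattice (τ + 1)) :
    DifferentiableAt ℂ (appellSumTransform τ) u :=
  DifferentiableAt.mul (by fun_prop) <|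
    (differentiableAt_appellSum (im_div_add_one_pos hτ)
      (div_add_one_notMem_tauLattice hτ hu)).comp u (f := (· / (τ + 1))) (by fun_prop)

lemma tendsto_mul_appellSumTransform (hτ : 0 < τ.im) :
    Tendsto (fun u => u * appellSumTransform τ u) (𝓝[≠] 0) (𝓝 (1 / π)) := by
  have hscale : Tendsto (fun u : ℂ => u / (τ + 1)) (𝓝[≠] 0) (𝓝[≠] 0) :=
    tendsto_nhdsWithin_of_tendsto_nhds_of_eventually_within _
      ((Continuous.tendsto' (f := fun u => u / (τ + 1)) (by fun_prop) _ _ (zero_div _)).mono_left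
        nhdsWithin_le_nhds)
      (eventually_nhdsWithin_of_forall fun u hu =>
        div_ne_zero hu (add_one_ne_zero_of_im_pos hτ))
  have hexp : Tendsto (fun u : ℂ => exp (π * I * (u ^ 2 - τ * u) / (τ + 1))) (𝓝[≠] 0) (𝓝 1) :=
    (Continuous.tendsto' (by fun_prop) _ _ (by simp)).mono_left nhdsWithin_le_nhds
  have h := hexp.mul ((tendsto_mul_appellSum (im_div_add_one_pos hτ)).comp hscale)
  rw [one_mul] at h
  refine h.congr fun u => ?_
  rw [appellSumTransform, Function.comp_apply]
  ring

lemma appellSumTransform_add_period (hτ : 0 < τ.im) (u : ℂ) :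
    appellSumTransform τ (u + (τ + 1)) = exp (2 * π * I * u) * appellSumTransform τ u := by
  have hT := add_one_ne_zero_of_im_pos hτ
  have hexp : exp (π * I * ((u + (τ + 1)) ^ 2 - τ * (u + (τ + 1))) / (τ + 1)) =
      -(exp (2 * π * I * u) * exp (π * I * (u ^ 2 - τ * u) / (τ + 1))) := by
    rw [← exp_add, neg_eq_neg_one_mul, ← exp_pi_mul_I, ← exp_add]
    congr 1
    field_simp
    ring
  rw [appellSumTransform, appellSumTransform, add_div, div_self hT, appellSum_add_one, hexp]
  ring

lemma two_div_neg_I_mul_cpow_half {T : ℂ} (hT : T ≠ 0) :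
    2 / (-I * T) ^ (1 / 2 : ℂ) = 2 * I / T * (-I * T) ^ (1 / 2 : ℂ) := by
  have hne : (-I * T) ^ (1 / 2 : ℂ) ≠ 0 := by simp [hT]
  have hsq : ((-I * T) ^ (1 / 2 : ℂ)) ^ 2 = -I * T := by simp
  rw [div_eq_iff hne, mul_assoc, ← sq, hsq]
  field_simp
  simp

lemma appellSumTransform_add_one (hτ : 0 < τ.im) (hu : u ∉ tauLattice (τ + 1)) :
    appellSumTransform τ (u + 1) = -appellSumTransform τ u -
      2 / (-I * (τ + 1)) ^ (1 / 2 : ℂ) * jacobiTheta (τ + 1) *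
        exp (π * I * (u ^ 2 + (1 - τ) * u + 1) / (τ + 1)) := by
  have hT := add_one_ne_zero_of_im_pos hτ
  have hv : (u - τ) / (τ + 1) ∉ tauLattice (τ / (τ + 1)) := by
    refine div_add_one_notMem_tauLattice hτ fun h => hu ?_
    rw [tauLattice_add_one] at h ⊢
    simpa using add_mem h (self_mem_tauLattice τ)
  have hadd := appellSum_add_self (im_div_add_one_pos hτ) hv
  rw [← add_div, sub_add_cancel, jacobiTheta_div_add_one_add_one hτ] at hadd
  have hshift : appellSum (τ / (τ + 1)) ((u + 1) / (τ + 1)) =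
      -appellSum (τ / (τ + 1)) ((u - τ) / (τ + 1)) := by
    rw [← appellSum_add_one]
    congr 1
    field_simp
    ring
  have hexp1 : exp (π * I * ((u + 1) ^ 2 - τ * (u + 1)) / (τ + 1)) =
      -(exp (π * I * (u ^ 2 - τ * u) / (τ + 1)) * exp (2 * π * I * ((u - τ) / (τ + 1)))) := by
    rw [← exp_add, neg_eq_neg_one_mul, ← exp_pi_mul_I, ← exp_add]
    congr 1
    field_simp
    ring
  have hexp2 : exp (π * I * (u ^ 2 + (1 - τ) * u + 1) / (τ + 1)) =
      -(exp (π * I * (u ^ 2 - τ * u) / (τ + 1)) * exp (π * I * ((u - τ) / (τ + 1)))) := by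
    rw [← exp_add, neg_eq_neg_one_mul, ← exp_pi_mul_I, ← exp_add]
    congr 1
    field_simp
    ring
  rw [appellSumTransform, appellSumTransform, hadd, hshift, hexp1, hexp2,
    two_div_neg_I_mul_cpow_half hT]
  ring

lemma exp_mul_mordellIntegral_add_one (hτ : 0 < τ.im) (u : ℂ) :
    exp (3 * π * I / 4 - π * I * τ / 4) *
        (mordellIntegral (τ + 1) (u - τ / 2) + mordellIntegral (τ + 1) (u + 1 - τ / 2)) =
      2 / (-I * (τ + 1)) ^ (1 / 2 : ℂ) * exp (π * I * (u ^ 2 + (1 - τ) * u + 1) / (τ + 1)) := by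
  have hT := add_one_ne_zero_of_im_pos hτ
  have hexp : exp (π * I * (u ^ 2 + (1 - τ) * u + 1) / (τ + 1)) =
      exp (3 * π * I / 4 - π * I * τ / 4) * exp (π * I * (u - τ / 2 + 1 / 2) ^ 2 / (τ + 1)) := by
    rw [← exp_add]
    congr 1
    field_simp
    ring
  rw [add_sub_right_comm, mordellIntegral_add_mordellIntegral_add_one (im_add_one_pos hτ), hexp]
  ring

lemma exp_mul_mordellIntegral_add_period (hτ : 0 < τ.im) (u : ℂ) :
    exp (3 * π * I / 4 - π * I * τ / 4) * mordellIntegral (τ + 1) (u + (τ + 1) - τ / 2) =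
      exp (2 * π * I * u) *
          (exp (3 * π * I / 4 - π * I * τ / 4) * mordellIntegral (τ + 1) (u - τ / 2)) -
        2 * I * exp (π * I * u) := by
  have hexp1 : exp (2 * π * I * (u - τ / 2) + π * I * (τ + 1)) = -exp (2 * π * I * u) := by
    rw [neg_eq_neg_one_mul, ← exp_pi_mul_I, ← exp_add]
    congr 1
    ring
  have hexp2 : exp (3 * π * I / 4 - π * I * τ / 4) *
      exp (π * I * (u - τ / 2) + 3 * π * I * (τ + 1) / 4) = -I * exp (π * I * u) := by
    have hI : -I = exp (π * I + π / 2 * I) := by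
      rw [exp_add, exp_pi_mul_I, exp_pi_div_two_mul_I, neg_one_mul]
    rw [hI, ← exp_add, ← exp_add]
    congr 1
    ring
  rw [add_sub_right_comm, mordellIntegral_add_period (im_add_one_pos hτ), hexp1]
  linear_combination 2 * hexp2

theorem appellSum_sub_appellSumTransform (hτ : 0 < τ.im) (hu : u ∉ tauLattice (τ + 1)) :
    appellSum τ u - appellSumTransform τ u = jacobiTheta (τ + 1) *
      (exp (3 * π * I / 4 - π * I * τ / 4) * mordellIntegral (τ + 1) (u - τ / 2)) := by
  have hT := im_add_one_pos hτ
  let H : ℂ → ℂ := fun u => jacobiTheta (τ + 1) *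
    (exp (3 * π * I / 4 - π * I * τ / 4) * mordellIntegral (τ + 1) (u - τ / 2))
  have hH : Differentiable ℂ H := by
    have := differentiable_mordellIntegral hT
    fun_prop
  refine sub_eq_zero.mp (eq_zero_of_quasiPeriodic_of_tendsto hT
    (G := fun u => appellSum τ u - appellSumTransform τ u - H u) ?_ ?_ ?_ ?_ u hu)
  · exact fun u hu => ((differentiableAt_appellSum hτ (tauLattice_add_one τ ▸ hu)).sub
      (differentiableAt_appellSumTransform hτ hu)).sub (hH u)
  · have hH0 : Tendsto (fun u => u * H u) (𝓝[≠] 0) (𝓝 0) :=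
      ((continuous_id.mul hH.continuous).tendsto' _ _ (zero_mul _)).mono_left nhdsWithin_le_nhds
    simpa [mul_sub] using
      ((tendsto_mul_appellSum hτ).sub (tendsto_mul_appellSumTransform hτ)).sub hH0
  · intro u hu
    simp only [H, appellSum_add_one, appellSumTransform_add_one hτ hu]
    linear_combination -jacobiTheta (τ + 1) * exp_mul_mordellIntegral_add_one hτ u
  · intro u hu
    simp only [H, exp_mul_mordellIntegral_add_period hτ, appellSumTransform_add_period hτ]
    rw [← add_assoc, appellSum_add_one, appellSum_add_self hτ (tauLattice_add_one τ ▸ hu)]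
    ring

end ModularTransform

section MockTheta

open scoped Real

variable {τ : ℂ}

lemma mordellIntegral_add_one_neg_div_four (hτ : 0 < τ.im) :
    mordellIntegral (τ + 1) (-(τ / 4)) = exp (π * I * (τ - 1) / 16) *
      ∫ x : ℝ, exp (-(π * x) / 2) / cosh (π * (x + I / 4)) * exp (π * I * (τ + 1) * x ^ 2) := by
  rw [mordellIntegral_eq_integral_add_mul_I (im_add_one_pos hτ) _ (a := 1 / 4) (by norm_num)
    (by norm_num)]
  congr 2
  · push_cast
    ring
  · ext x
    rw [mordellKernel, div_mul_eq_mul_div, ← exp_add]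
    congr 2 <;> push_cast <;> ring

lemma jacobiThetaZw_half (hτ : 0 < τ.im) :
    jacobiThetaZw (τ / 2) τ = -I * exp (-(π * I * τ / 4)) * jacobiTheta (τ + 1) := by
  have hshift := ((Equiv.addRight (1 : ℤ)).hasSum_iff.mpr
    (hasSum_jacobiTheta_add_one hτ)).mul_left (-I * exp (-(π * I * τ / 4)))
  rw [jacobiThetaZw, ← hshift.tsum_eq]
  refine tsum_congr fun n => ?_
  have hI : -I * (-1 : ℂ) ^ (n + 1) = exp (π / 2 * I + π * I * n) := by
    rw [exp_add, exp_pi_div_two_mul_I, exp_pi_mul_I_mul_intCast, zpow_add₀ (by norm_num), zpow_one]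
    ring
  calc _ = exp (π / 2 * I + π * I * n) * exp (-(π * I * τ / 4)) *
        exp (π * I * τ * (n + 1 : ℂ) ^ 2) := by
        simp only [← exp_add]
        ring_nf
    _ = _ := by
        rw [← hI, Function.comp_apply, Equiv.coe_addRight]
        push_cast
        ring

lemma muZw_half (u τ : ℂ) :
    muZw u (τ / 2) τ = I / 2 * appellSum τ u / jacobiThetaZw (τ / 2) τ := by
  rw [muZw, appellSum, div_mul_eq_mul_div, ← tsum_mul_left, ← tsum_mul_left]
  congr 2 with n
  set w := π * (u + n * τ) with hw
  have hden : 1 - exp (2 * π * I * u) * exp (2 * π * I * n * τ) =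
      exp (w * I) * (-(2 * I) * sin w) := by
    have h := exp_neg_two_mul_mul_I (-w)
    rw [sin_neg] at h
    rw [← exp_add, show 2 * π * I * u + 2 * π * I * n * τ = -(2 * -w * I) by rw [hw]; ring, h]
    ring_nf
  have hnum : exp (π * I * u) * exp (2 * π * I * n * (τ / 2)) * exp (π * I * τ * n * (n + 1)) =
      exp (w * I) * exp (π * I * τ * (n ^ 2 + n)) := by
    simp only [← exp_add, hw]
    ring_nf
  calc _ = exp (w * I) * appellCoeff τ n / (exp (w * I) * (-(2 * I) * sin w)) := by
        rw [hden, appellCoeff]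
        linear_combination (-1) ^ n / (exp (w * I) * (-(2 * I) * sin w)) * hnum
    _ = I / 2 * appellTerm τ u n := by
        rw [mul_div_mul_left _ _ (exp_ne_zero _), appellTerm, ← hw, ← div_div, div_neg, ← div_div,
          div_I]
        ring

lemma V21_eq_appellSum_div_jacobiTheta (hτ : 0 < τ.im) : V21 τ =
    -(I / 2) * exp (3 * π * I * τ / 16) * appellSum τ (τ / 4) / jacobiTheta (τ + 1) := by
  have hsplit : exp (-π * I * τ / 16) = exp (3 * π * I * τ / 16) * exp (-(π * I * τ / 4)) := by
    rw [← exp_add]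
    ring_nf
  rw [V21, muZw_half, jacobiThetaZw_half hτ, hsplit]
  have := exp_ne_zero (-(π * I * τ / 4))
  have := jacobiTheta_add_one_ne_zero hτ
  field_simp

lemma div_four_notMem_tauLattice (hτ : 0 < τ.im) : τ / 4 ∉ tauLattice τ := by
  intro h
  obtain ⟨m, n, hmn⟩ := mem_tauLattice.mp h
  have him : n * τ.im = τ.im / 4 := by simpa using congrArg im hmn
  have hn : (4 * n : ℝ) = 1 := mul_right_cancel₀ hτ.ne' (by linarith)
  have : 4 * n = 1 := by exact_mod_cast hn
  omega

lemma neg_I_mul_cpow {T : ℂ} (hT : 0 < T.im) (s : ℂ) :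
    (-I * T) ^ s = exp (-(π * I / 2) * s) * T ^ s := by
  have hT0 : T ≠ 0 := by rintro rfl; simp at hT
  have hI : -I ≠ 0 := neg_ne_zero.mpr I_ne_zero
  have harg : arg (-I) + arg T ∈ Set.Ioc (-π) π := by
    rw [arg_neg_I]
    constructor <;> linarith [Real.pi_pos, arg_nonneg_iff.mpr hT.le, arg_le_pi T]
  rw [cpow_def_of_ne_zero (mul_ne_zero hI hT0), cpow_def_of_ne_zero hT0, ← exp_add,
    (log_mul_eq_add_log_iff hI hT0).mpr harg, log_neg_I]
  ring_nf

lemma inv_zeta_mul_cpow_mul_V21_div_add_one (hτ : 0 < τ.im) :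
    (exp (2 * π * I / 8))⁻¹ * (τ + 1) ^ (-(1 / 2 : ℂ)) * V21 (τ / (τ + 1)) =
      -(I / 2) * exp (3 * π * I * τ / 16) * appellSumTransform τ (τ / 4) /
        jacobiTheta (τ + 1) := by
  have hT0 := add_one_ne_zero_of_im_pos hτ
  have hsqrt : ((τ + 1) ^ (1 / 2 : ℂ)) ^ 2 = τ + 1 := by
    rw [← cpow_nat_mul, Nat.cast_ofNat, mul_one_div_cancel two_ne_zero, cpow_one]
  have hexp : exp (3 * π * I * (τ / (τ + 1)) / 16) = exp (3 * π * I * τ / 16) *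
      exp (π * I * ((τ / 4) ^ 2 - τ * (τ / 4)) / (τ + 1)) := by
    rw [← exp_add]
    congr 1
    field_simp
    ring
  have hzeta : exp (-(π * I / 2) * (1 / 2)) = (exp (2 * π * I / 8))⁻¹ := by
    rw [← exp_neg]
    ring_nf
  rw [V21_eq_appellSum_div_jacobiTheta (im_div_add_one_pos hτ), jacobiTheta_div_add_one_add_one hτ,
    neg_I_mul_cpow (im_add_one_pos hτ), hexp, hzeta, cpow_neg, appellSumTransform,
    div_right_comm τ 4]
  have := exp_ne_zero (2 * π * I / 8)
  have := jacobiTheta_add_one_ne_zero hτ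
  have : (τ + 1) ^ (1 / 2 : ℂ) ≠ 0 := fun h => hT0 (by rw [← hsqrt, h, zero_pow two_ne_zero])
  field_simp
  rw [hsqrt]

theorem V21_sub_inv_zeta_mul_V21_div_add_one (hτ : 0 < τ.im) :
    V21 τ - (exp (2 * π * I / 8))⁻¹ * (τ + 1) ^ (-(1 / 2 : ℂ)) * V21 (τ / (τ + 1)) =
      1 / 2 * exp (3 * π * I / 16) *
        ∫ x : ℝ, exp (-(π * x) / 2) / cosh (π * (x + I / 4)) * exp (π * I * (τ + 1) * x ^ 2) := by
  have hdiff := appellSum_sub_appellSumTransform hτ (u := τ / 4)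
    (by rw [tauLattice_add_one]; exact div_four_notMem_tauLattice hτ)
  rw [show τ / 4 - τ / 2 = -(τ / 4) by ring, mordellIntegral_add_one_neg_div_four hτ] at hdiff
  have hexp : -I * (exp (3 * π * I * τ / 16) * (exp (3 * π * I / 4 - π * I * τ / 4) *
      exp (π * I * (τ - 1) / 16))) = exp (3 * π * I / 16) := by
    rw [← exp_neg_pi_div_two_mul_I]
    simp only [← exp_add]
    ring_nf
  rw [V21_eq_appellSum_div_jacobiTheta hτ, inv_zeta_mul_cpow_mul_V21_div_add_one hτ, ← sub_div,
    ← mul_sub, hdiff, ← hexp, mul_left_comm,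
    mul_div_cancel_left₀ _ (jacobiTheta_add_one_ne_zero hτ)]
  ring

end MockTheta

/-- Theorem 1.2(ii) for `(m,n) = (2,1)` on ℍ:
`V₂₁(τ) − ζ₈⁻¹ (τ+1)^{−1/2} V₂₁(τ/(τ+1)) = −(i/8)∫_{1}^{i∞} E₂(u/32)/√(−i(u+τ)) du`. -/
theorem V21_quantum_transform :
    ∀ τ : ℂ, 0 < τ.im →
      V21 τ - (Complex.exp (2 * (Real.pi : ℂ) * I / 8))⁻¹ *
          (τ + 1) ^ (-(1/2 : ℂ)) * V21 (τ / (τ + 1)) =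
        -(I/8) * (I * ∫ t in Set.Ioi (0 : ℝ),
          E2fun ((1 + I * t) / 32) / ((-I * (1 + I * t + τ)) ^ ((1 : ℂ)/2))) := by
  intro τ hτ
  have hI : ∀ w : ℂ, -(I / 8) * (I * w) = w / 8 := fun w => by linear_combination -(w / 8) * I_sq
  rw [V21_sub_inv_zeta_mul_V21_div_add_one hτ, integral_E2fun_div_cpow hτ, hI]
  ring
end

section
/- Define V₁₁(τ) := −e^{−πiτ/16}·μ(τ/4 + 1/2, τ/2; τ) for τ ∈ ℍ. Then for every τ ∈ ℍ: V₁₁(τ + 4) = ζ₈^{−1}·V₁₁(τ), where ζ₈ := e^{2πi/8}; equivalently V₁₁(τ) − ζ₈·V₁₁(τ+4) = 0. (This is the transformation of Theorem 1.2(iii) for (m,n) = (1,1), with a₁ = 8, κ₁₁ = 1, b₁ = 4.) -/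
/-!
Up to a constant factor, the series defining `ϑ` and `μ` are unchanged termwise by the unit
translations, which gives Zwegers' rules `μ(u + 1, v; τ) = μ(u, v + 1; τ) = -μ(u, v; τ)` and
`μ(u, v; τ + 1) = e^{-πi/4} μ(u, v; τ)`. Replacing `τ` by `τ + 4` in `V₁₁` translates `u` by `1`,
`v` by `2` and the modulus by `4`, so `μ` acquires the factor `(-1)(-1)² e^{-πi} = 1`, and
`ζ₈⁻¹` comes from the prefactor `e^{-πiτ/16}` alone.
-/

open Complex

/-- `V₁₁(τ) = −e^{−πiτ/16} μ(τ/4 + 1/2, τ/2; τ)`. -/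
noncomputable def V11 (τ : ℂ) : ℂ :=
  -Complex.exp (-(Real.pi : ℂ) * I * τ / 16) * muZw (τ/4 + 1/2) (τ/2) τ

theorem exp_pi_mul_I_mul_int_mul_succ (n : ℤ) : exp (Real.pi * I * n * (n + 1)) = 1 := by
  obtain ⟨k, hk⟩ := Int.even_mul_succ_self n
  have hk' : (n : ℂ) * (n + 1) = k + k := mod_cast hk
  exact exp_eq_one_iff.2 ⟨k, by linear_combination Real.pi * I * hk'⟩

theorem jacobiThetaZw_add_one_left (v τ : ℂ) :
    jacobiThetaZw (v + 1) τ = -jacobiThetaZw v τ := by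
  unfold jacobiThetaZw
  rw [← tsum_neg]
  refine tsum_congr fun n => ?_
  have hexp : exp (2 * Real.pi * I * (n + 1/2) * (v + 1 + 1/2)) =
      -exp (2 * Real.pi * I * (n + 1/2) * (v + 1/2)) := by
    rw [← exp_antiperiodic, exp_eq_exp_iff_exists_int]
    exact ⟨n, by ring⟩
  rw [hexp, neg_mul]

theorem jacobiThetaZw_add_one_right (v τ : ℂ) :
    jacobiThetaZw v (τ + 1) = exp (Real.pi * I / 4) * jacobiThetaZw v τ := by
  unfold jacobiThetaZw
  rw [← tsum_mul_left]
  refine tsum_congr fun n => ?_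
  have hexp : exp (Real.pi * I * (τ + 1) * (n + 1/2) ^ 2) =
      exp (Real.pi * I / 4) * exp (Real.pi * I * τ * (n + 1/2) ^ 2) := calc
    _ = exp (Real.pi * I / 4 + Real.pi * I * τ * (n + 1/2) ^ 2 + Real.pi * I * n * (n + 1)) := by
      ring_nf
    _ = _ := by rw [exp_add, exp_add, exp_pi_mul_I_mul_int_mul_succ, mul_one]
  rw [hexp, mul_left_comm]

theorem muZw_add_one_left (u v τ : ℂ) : muZw (u + 1) v τ = -muZw u v τ := by
  have hprefactor : exp (Real.pi * I * (u + 1)) = -exp (Real.pi * I * u) := by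
    rw [mul_add_one, exp_antiperiodic]
  have hdenom : exp (2 * Real.pi * I * (u + 1)) = exp (2 * Real.pi * I * u) := by
    rw [mul_add_one, exp_periodic]
  simp only [muZw, hprefactor, hdenom, neg_div, neg_mul]

theorem muZw_add_one_middle (u v τ : ℂ) : muZw u (v + 1) τ = -muZw u v τ := by
  have hexp (n : ℤ) : exp (2 * Real.pi * I * n * (v + 1)) = exp (2 * Real.pi * I * n * v) :=
    exp_eq_exp_iff_exists_int.2 ⟨n, by ring⟩
  simp only [muZw, hexp, jacobiThetaZw_add_one_left, div_neg, neg_mul]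

theorem muZw_add_one_right (u v τ : ℂ) :
    muZw u v (τ + 1) = exp (-(Real.pi * I / 4)) * muZw u v τ := by
  have hnum (n : ℤ) : exp (Real.pi * I * (τ + 1) * n * (n + 1)) =
      exp (Real.pi * I * τ * n * (n + 1)) := calc
    _ = exp (Real.pi * I * τ * n * (n + 1) + Real.pi * I * n * (n + 1)) := by ring_nf
    _ = _ := by rw [exp_add, exp_pi_mul_I_mul_int_mul_succ, mul_one]
  have hdenom (n : ℤ) : exp (2 * Real.pi * I * n * (τ + 1)) = exp (2 * Real.pi * I * n * τ) :=
    exp_eq_exp_iff_exists_int.2 ⟨n, by ring⟩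
  simp only [muZw, hnum, hdenom, jacobiThetaZw_add_one_right, exp_neg]
  ring

theorem muZw_add_four_right (u v τ : ℂ) : muZw u v (τ + 4) = -muZw u v τ := by
  have hroot : exp (-(Real.pi * I / 4)) ^ 4 = -1 := by
    rw [← exp_nat_mul, ← exp_neg_pi_mul_I]
    congr 1
    push_cast
    ring
  calc muZw u v (τ + 4) = muZw u v (τ + 1 + 1 + 1 + 1) := by ring_nf
    _ = exp (-(Real.pi * I / 4)) ^ 4 * muZw u v τ := by
      simp only [muZw_add_one_right]
      ring
    _ = -muZw u v τ := by rw [hroot, neg_one_mul]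

/-- Theorem 1.2(iii) for `(m,n) = (1,1)`: `V₁₁(τ + 4) = ζ₈⁻¹ V₁₁(τ)` on ℍ. -/
theorem V11_shift :
    ∀ τ : ℂ, 0 < τ.im →
      V11 (τ + 4) = (Complex.exp (2 * (Real.pi : ℂ) * I / 8))⁻¹ * V11 τ := by
  intro τ _
  have hmu : muZw ((τ + 4) / 4 + 1 / 2) ((τ + 4) / 2) (τ + 4) =
      muZw (τ / 4 + 1 / 2) (τ / 2) τ := calc
    _ = muZw (τ / 4 + 1 / 2 + 1) (τ / 2 + 1 + 1) (τ + 4) := by ring_nf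
    _ = _ := by
      simp only [muZw_add_one_left, muZw_add_one_middle, muZw_add_four_right, neg_neg]
  have hexp : exp (-Real.pi * I * (τ + 4) / 16) =
      (exp (2 * Real.pi * I / 8))⁻¹ * exp (-Real.pi * I * τ / 16) := by
    rw [← exp_neg, ← exp_add]
    ring_nf
  rw [V11, V11, hmu, hexp]
  ring
end
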